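/- arXiv:2208.05467 — 2 statements merged into one kernel-verified Lean document; each statement's English description precedes it below -/
import Mathlib

section
/- For all m, n ∈ ℕ with m > n ≥ 3, there exist full-dimensional pointed polyhedra P ⊂ ℝⁿ and Q ⊂ ℝᵐ, each equipped with an irredundant description, and a linear map π : ℝᵐ → ℝⁿ with π(Q) = P such that C(P) ⊄ π(C(Q)) and C(P) ∩ π(C(Q)) equals exactly the set of edge directions of P. Moreover, this can be achieved with Q a simple polyhedron and with P a polytope having exactly n+2 facets and exactly n+2 vertices, as well as (by a second choice of P, Q, π) with Q simple and P a pointed polyhedral cone having exactly n+1 facets and exactly n+1 extreme rays (edges). -/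
open Matrix

noncomputable section

/-- The polyhedron `{x : Ax = b, Bx ≤ d}`. -/
def polySet {p q n : Type*} [Fintype n] (A : Matrix p n ℝ) (b : p → ℝ)
    (B : Matrix q n ℝ) (d : q → ℝ) : Set (n → ℝ) :=
  {x | A.mulVec x = b ∧ B.mulVec x ≤ d}

/-- The circuits of the linear description `Ax = b, Bx ≤ d`: nonzero kernel elements `g` of `A`
whose support of `Bg` is inclusion-minimal among nonzero kernel elements. -/
def circuits {p q n : Type*} [Fintype n] (A : Matrix p n ℝ) (B : Matrix q n ℝ) :
    Set (n → ℝ) :=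
  {g | A.mulVec g = 0 ∧ g ≠ 0 ∧
    ∀ y : n → ℝ, A.mulVec y = 0 → y ≠ 0 →
      {i | B.mulVec y i ≠ 0} ⊆ {i | B.mulVec g i ≠ 0} →
      {i | B.mulVec g i ≠ 0} ⊆ {i | B.mulVec y i ≠ 0}}

/-- A face of a polyhedron `P`: either `P` itself or the set of maximizers of a linear
functional over `P` whose supremum is finite and attained. -/
def IsFace {n : Type*} [Fintype n] (P F : Set (n → ℝ)) : Prop :=
  F = P ∨ ∃ (c : n → ℝ) (s : ℝ),
    (∀ y ∈ P, c ⬝ᵥ y ≤ s) ∧ (∃ y ∈ P, c ⬝ᵥ y = s) ∧ F = {x ∈ P | c ⬝ᵥ x = s}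

/-- The dimension of the affine span of a set. -/
def spanDim {n : Type*} [Fintype n] (S : Set (n → ℝ)) : ℕ :=
  Module.finrank ℝ (affineSpan ℝ S).direction

def IsVertex {n : Type*} [Fintype n] (P : Set (n → ℝ)) (v : n → ℝ) : Prop :=
  IsFace P {v}

def IsEdge {n : Type*} [Fintype n] (P F : Set (n → ℝ)) : Prop :=
  IsFace P F ∧ spanDim F = 1

/-- A nonzero vector lying in the direction space of the affine span of some edge of `P`. -/
def IsEdgeDirection {n : Type*} [Fintype n] (P : Set (n → ℝ)) (g : n → ℝ) : Prop :=
  g ≠ 0 ∧ ∃ F, IsEdge P F ∧ g ∈ (affineSpan ℝ F).direction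

/-- A facet: a face whose affine span has dimension `dim P - 1`. -/
def IsFacet {n : Type*} [Fintype n] (P F : Set (n → ℝ)) : Prop :=
  IsFace P F ∧ spanDim F + 1 = spanDim P

/-- A pointed set: contains no affine line. -/
def PointedSet {n : Type*} [Fintype n] (P : Set (n → ℝ)) : Prop :=
  ∀ x v : n → ℝ, (∀ t : ℝ, x + t • v ∈ P) → v = 0

/-- `Ax = b, Bx ≤ d` is an irredundant description of `P`. -/
def Irredundant {p q n : Type*} [Fintype n] (A : Matrix p n ℝ) (b : p → ℝ)
    (B : Matrix q n ℝ) (d : q → ℝ) (P : Set (n → ℝ)) : Prop :=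
  P = polySet A b B d ∧
  {x | A.mulVec x = b} = (affineSpan ℝ P : Set (n → ℝ)) ∧
  ∀ i, IsFacet P {x ∈ P | B.mulVec x i = d i}

/-- A basic solution of the system `Ax = b, Bx ≤ d`: satisfies the equalities, and the rows of
`A` together with the tight rows of `B` span the whole space. -/
def IsBasicSolution {p q n : Type*} [Fintype n] (A : Matrix p n ℝ) (b : p → ℝ)
    (B : Matrix q n ℝ) (d : q → ℝ) (g : n → ℝ) : Prop :=
  A.mulVec g = b ∧
  Submodule.span ℝ (Set.range (fun i => A i) ∪
    (fun i => B i) '' {i | B.mulVec g i = d i}) = ⊤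

/-!
Let `K` be the product of the cone over a quadrilateral in `ℝ³` with the orthant of `ℝⁿ⁻³`. It has
`n + 1` facets and `n + 1` extreme rays, and is the image of the orthant of `ℝᵐ` under a linear map
`π` sending the unit vectors onto generators of these rays. If the generators are normalized by the
sum of the facet forms, `π` also maps the simplex `{y : 0 ≤ y, ∑ i, y i ≤ 1}` onto the truncation of
`K` by the condition that this sum is at most one.

Up to scaling, the circuits of the orthant are the unit vectors, and those of the simplex the
differences of its vertices. Hence their nonzero images are the extreme rays of `K` and the
differences of vertices of the truncation. The quadrilateral is chosen so that a facet form of the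
truncation takes distinct values at two vertices unless its facet contains both. If a difference of
two vertices is a circuit, it is therefore determined by the facets containing both of them, so it
is an edge direction. Finally, the hyperplanes of two opposite facets of the cone over the
quadrilateral meet in a line which is a circuit of `K`, but is neither an extreme ray nor parallel
to the truncating facet, so it is not in the image.
-/

section Rows

variable {ι E : Type*} [AddCommGroup E] [Module ℝ E]

/-- The polyhedron `{x : φ k x ≤ d k for all k}` cut out by a family of linear forms. -/
def polyhedron (φ : ι → Module.Dual ℝ E) (d : ι → ℝ) : Set E :=
  {x | ∀ k, φ k x ≤ d k}

/-- The rows of the system `φ k x ≤ d k` that hold with equality at `x`. -/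
def tightRows (φ : ι → Module.Dual ℝ E) (d : ι → ℝ) (x : E) : Set ι :=
  {k | φ k x = d k}

/-- The common kernel of the rows tight at `x`. For `x` in the polyhedron this is the direction
space of the smallest face containing `x`; with `d = 0` it expresses minimality of supports. -/
def tightKer (φ : ι → Module.Dual ℝ E) (d : ι → ℝ) (x : E) : Submodule ℝ E :=
  ⨅ k ∈ tightRows φ d x, LinearMap.ker (φ k)

/-- The smallest face of the polyhedron `φ k x ≤ d k` containing its point `x`. -/
def minFace (φ : ι → Module.Dual ℝ E) (d : ι → ℝ) (x : E) : Set E :=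
  {y ∈ polyhedron φ d | tightRows φ d x ⊆ tightRows φ d y}

/-- A circuit of the rows `φ`: a nonzero `g` spanning the common kernel of the rows vanishing at
`g`. For rows separating points this says that `g` has inclusion-minimal support, see
`circuits_rowMatrix`. -/
def IsCircuit (φ : ι → Module.Dual ℝ E) (g : E) : Prop :=
  g ≠ 0 ∧ tightKer φ 0 g = ℝ ∙ g

theorem exists_ne_zero_eq_smul_of_mem_span {g h : E} (hh : h ≠ 0) (hg : h ∈ ℝ ∙ g) :
    ∃ t : ℝ, t ≠ 0 ∧ g = t • h := by
  obtain ⟨c, rfl⟩ := Submodule.mem_span_singleton.1 hg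
  have hc : c ≠ 0 := left_ne_zero_of_smul hh
  exact ⟨c⁻¹, inv_ne_zero hc, (inv_smul_smul₀ hc g).symm⟩

theorem finrank_eq_one_iff_exists_eq_span_singleton {S : Submodule ℝ E} :
    Module.finrank ℝ S = 1 ↔ ∃ g ≠ 0, S = ℝ ∙ g := by
  constructor
  · intro h
    obtain ⟨⟨g, hgS⟩, hg, hspan⟩ := finrank_eq_one_iff'.1 h
    refine ⟨g, fun h0 => hg (Subtype.ext h0), le_antisymm (fun y hy => ?_) ?_⟩
    · obtain ⟨c, hc⟩ := hspan ⟨y, hy⟩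
      exact Submodule.mem_span_singleton.2 ⟨c, congrArg Subtype.val hc⟩
    · exact (Submodule.span_singleton_le_iff_mem _ _).2 hgS
  · rintro ⟨g, hg, rfl⟩
    exact finrank_span_singleton hg

variable {φ : ι → Module.Dual ℝ E} {d : ι → ℝ} {x y g : E}

theorem mem_tightKer : g ∈ tightKer φ d x ↔ ∀ k, φ k x = d k → φ k g = 0 := by
  simp [tightKer, tightRows, Submodule.mem_iInf]

theorem tightKer_anti {e : ι → ℝ} (h : tightRows φ d x ⊆ tightRows φ e y) :
    tightKer φ e y ≤ tightKer φ d x :=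
  biInf_mono h

theorem tightKer_eq_top (h : tightRows φ d x = ∅) : tightKer φ d x = ⊤ := by
  simp [tightKer, h]

theorem tightKer_eq_ker {k : ι} (h : tightRows φ d x = {k}) :
    tightKer φ d x = LinearMap.ker (φ k) := by
  simp [tightKer, h]

theorem self_mem_tightKer_zero : g ∈ tightKer φ 0 g :=
  mem_tightKer.2 fun _ hk => hk

theorem self_mem_minFace (hx : x ∈ polyhedron φ d) : x ∈ minFace φ d x :=
  ⟨hx, subset_rfl⟩

theorem sub_mem_tightKer (h : y ∈ minFace φ d x) : y - x ∈ tightKer φ d x :=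
  mem_tightKer.2 fun k hk => by rw [map_sub, h.2 hk, hk, sub_self]

theorem tightRows_subset_add (hg : g ∈ tightKer φ d x) :
    tightRows φ d x ⊆ tightRows φ d (x + g) := fun k hk => by
  change φ k (x + g) = d k
  rw [map_add, mem_tightKer.1 hg k hk, add_zero, hk]

theorem tightRows_midpoint (hx : x ∈ polyhedron φ d) (hy : y ∈ polyhedron φ d) :
    tightRows φ d (midpoint ℝ x y) = tightRows φ d x ∩ tightRows φ d y := by
  ext k
  have hxk := hx k
  have hyk := hy k
  change φ k (midpoint ℝ x y) = d k ↔ φ k x = d k ∧ φ k y = d k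
  rw [midpoint_eq_smul_add, map_smul, map_add, invOf_eq_inv, smul_eq_mul]
  constructor
  · intro h
    constructor <;> linarith
  · rintro ⟨h₁, h₂⟩
    rw [h₁, h₂]
    ring

theorem minFace_smul {t : ℝ} (ht : t ≠ 0) : minFace φ 0 (t • x) = minFace φ 0 x := by
  have htight : tightRows φ 0 (t • x) = tightRows φ 0 x := by
    ext k
    simp [tightRows, ht]
  rw [minFace, htight, minFace]

theorem zero_mem_polyhedron_zero : 0 ∈ polyhedron φ 0 := fun k => (map_zero (φ k)).le

theorem smul_mem_polyhedron_zero (hx : x ∈ polyhedron φ 0) {t : ℝ} (ht : 0 ≤ t) :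
    t • x ∈ polyhedron φ 0 := fun k => by
  simpa using mul_nonpos_of_nonneg_of_nonpos ht (hx k)

theorem convex_polyhedron : Convex ℝ (polyhedron φ d) := by
  have h : polyhedron φ d = ⋂ k, {x | φ k x ≤ d k} := by ext; simp [polyhedron]
  rw [h]
  exact convex_iInter fun k => convex_halfSpace_le (φ k).isLinear (d k)

theorem isCircuit_of_tightKer_le (hg : g ≠ 0) (h : tightKer φ 0 g ≤ ℝ ∙ g) : IsCircuit φ g :=
  ⟨hg, h.antisymm ((Submodule.span_singleton_le_iff_mem _ _).2 self_mem_tightKer_zero)⟩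

theorem isCircuit_of_tightKer_eq (hg : g ≠ 0) (h : tightKer φ d x = ℝ ∙ g) : IsCircuit φ g := by
  have hgx : g ∈ tightKer φ d x := h ▸ Submodule.mem_span_singleton_self g
  refine isCircuit_of_tightKer_le hg ?_
  rw [← h]
  exact tightKer_anti fun k hk => mem_tightKer.1 hgx k hk

theorem IsCircuit.smul (hg : IsCircuit φ g) {t : ℝ} (ht : t ≠ 0) : IsCircuit φ (t • g) := by
  refine isCircuit_of_tightKer_eq (d := 0) (x := g) (smul_ne_zero ht hg.1) ?_
  rw [hg.2, Submodule.span_singleton_smul_eq ht.isUnit]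

theorem IsCircuit.exists_eq_smul (hg : IsCircuit φ g) (hy : y ≠ 0) (h : y ∈ tightKer φ 0 g) :
    ∃ t : ℝ, t ≠ 0 ∧ g = t • y :=
  exists_ne_zero_eq_smul_of_mem_span hy (hg.2 ▸ h)

theorem exists_pos_add_smul_mem [Finite ι] (hx : x ∈ polyhedron φ d) (hg : g ∈ tightKer φ d x) :
    ∃ ε : ℝ, 0 < ε ∧ x + ε • g ∈ polyhedron φ d := by
  have hrow (k : ι) : ∀ᶠ t : ℝ in nhdsWithin 0 (Set.Ioi 0), φ k (x + t • g) ≤ d k := by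
    rcases (hx k).eq_or_lt with htight | hslack
    · simp [htight, mem_tightKer.1 hg k htight]
    · have hcont : ContinuousAt (fun t : ℝ => φ k x + t * φ k g) 0 := by fun_prop
      have hlt := hcont.eventually_lt (continuousAt_const (y := d k)) (by simpa using hslack)
      filter_upwards [hlt.filter_mono nhdsWithin_le_nhds] with t ht
      simpa using ht.le
  obtain ⟨ε, hmem, hε⟩ :=
    ((Filter.eventually_all.2 hrow).and self_mem_nhdsWithin).exists
  exact ⟨ε, hε, hmem⟩

theorem map_tightKer_le {κ F : Type*} [Finite κ] [AddCommGroup F] [Module ℝ F]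
    {ψ : κ → Module.Dual ℝ F} {e : κ → ℝ} {f : F →ₗ[ℝ] E}
    (hf : Set.MapsTo f (polyhedron ψ e) (polyhedron φ d)) {z : F} (hz : z ∈ polyhedron ψ e) :
    (tightKer ψ e z).map f ≤ tightKer φ d (f z) := by
  have key (k : ι) (hk : φ k (f z) = d k) (w : F) (hw : w ∈ tightKer ψ e z) : φ k (f w) ≤ 0 := by
    obtain ⟨ε, hε, hmem⟩ := exists_pos_add_smul_mem hz hw
    have hle := hf hmem k
    rw [map_add, map_add, hk, map_smul, map_smul, smul_eq_mul] at hle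
    exact nonpos_of_mul_nonpos_right (by linarith) hε
  rintro _ ⟨w, hw, rfl⟩
  refine mem_tightKer.2 fun k hk => le_antisymm (key k hk w hw) ?_
  simpa using key k hk (-w) (neg_mem hw)

theorem direction_affineSpan_minFace [Finite ι] (hx : x ∈ polyhedron φ d) :
    (affineSpan ℝ (minFace φ d x)).direction = tightKer φ d x := by
  apply le_antisymm
  · rw [direction_affineSpan, vectorSpan_eq_span_vsub_set_right ℝ (self_mem_minFace hx),
      Submodule.span_le]
    rintro _ ⟨y, hy, rfl⟩
    exact sub_mem_tightKer hy
  · intro g hg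
    obtain ⟨ε, hε, hmem⟩ := exists_pos_add_smul_mem hx hg
    have hface : x + ε • g ∈ minFace φ d x :=
      ⟨hmem, tightRows_subset_add (Submodule.smul_mem _ ε hg)⟩
    have hdir := AffineSubspace.vsub_mem_direction (mem_affineSpan ℝ hface)
      (mem_affineSpan ℝ (self_mem_minFace hx))
    simpa [hε.ne'] using Submodule.smul_mem _ ε⁻¹ hdir

theorem exists_subset_minFace [Finite ι] {F : Set E} (hF : F ⊆ polyhedron φ d) (hne : F.Nonempty)
    (hconv : Convex ℝ F) : ∃ x ∈ F, F ⊆ minFace φ d x := by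
  obtain ⟨_, ⟨x, hx, rfl⟩, hmin⟩ :=
    Set.Finite.exists_minimal (Set.toFinite (tightRows φ d '' F)) (hne.image _)
  refine ⟨x, hx, fun y hy => ⟨hF hy, ?_⟩⟩
  have hmid := tightRows_midpoint (hF hx) (hF hy)
  have hle := hmin (Set.mem_image_of_mem _ (hconv.midpoint_mem hx hy))
    (hmid.trans_le Set.inter_subset_left)
  exact hle.trans (hmid.trans_le Set.inter_subset_right)

end Rows

section Faces

variable {ι n : Type*} [Finite ι] [Fintype n] {φ : ι → Module.Dual ℝ (n → ℝ)} {d : ι → ℝ}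
  {x g : n → ℝ}

theorem spanDim_minFace (hx : x ∈ polyhedron φ d) :
    spanDim (minFace φ d x) = Module.finrank ℝ (tightKer φ d x) := by
  rw [spanDim, direction_affineSpan_minFace hx]

theorem setOf_dotProduct_eq_minFace {c : n → ℝ} {s : ℝ} (hle : ∀ y ∈ polyhedron φ d, c ⬝ᵥ y ≤ s)
    (hx : x ∈ polyhedron φ d) (hs : c ⬝ᵥ x = s)
    (hsub : {y ∈ polyhedron φ d | c ⬝ᵥ y = s} ⊆ minFace φ d x) :
    {y ∈ polyhedron φ d | c ⬝ᵥ y = s} = minFace φ d x := by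
  refine hsub.antisymm fun y hy => ⟨hy.1, le_antisymm (hle y hy.1) ?_⟩
  obtain ⟨ε, hε, hmem⟩ := exists_pos_add_smul_mem hx (neg_mem (sub_mem_tightKer hy))
  have hmax := hle _ hmem
  rw [dotProduct_add, dotProduct_smul, dotProduct_neg, dotProduct_sub, hs, smul_eq_mul] at hmax
  by_contra! hlt
  nlinarith

theorem isFace_minFace (hx : x ∈ polyhedron φ d) : IsFace (polyhedron φ d) (minFace φ d x) := by
  cases nonempty_fintype ι
  classical
  set f : Module.Dual ℝ (n → ℝ) := ∑ k with k ∈ tightRows φ d x, φ k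
  have hf (y : n → ℝ) : (dotProductEquiv ℝ n).symm f ⬝ᵥ y =
      ∑ k with k ∈ tightRows φ d x, φ k y := by
    rw [← dotProductEquiv_apply_apply, LinearEquiv.apply_symm_apply, LinearMap.sum_apply]
  have hle : ∀ y ∈ polyhedron φ d, ∀ k ∈ ({k | k ∈ tightRows φ d x} : Finset ι), φ k y ≤ d k :=
    fun y hy k _ => hy k
  refine .inr ⟨(dotProductEquiv ℝ n).symm f, ∑ k with k ∈ tightRows φ d x, d k,
    fun y hy => (hf y).trans_le (Finset.sum_le_sum (hle y hy)), ⟨x, hx, (hf x).trans ?_⟩, ?_⟩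
  · exact Finset.sum_congr rfl fun k hk => (Finset.mem_filter.1 hk).2
  · ext y
    refine and_congr_right fun hy => ?_
    rw [hf, Finset.sum_eq_sum_iff_of_le (hle y hy)]
    simp only [Finset.mem_filter, Finset.mem_univ, true_and]
    rfl

theorem isFace_iff (hne : (polyhedron φ d).Nonempty) {F : Set (n → ℝ)} :
    IsFace (polyhedron φ d) F ↔ ∃ x ∈ polyhedron φ d, F = minFace φ d x := by
  classical
  constructor
  · rintro (rfl | ⟨c, s, hle, ⟨y, hy, hys⟩, rfl⟩)
    · obtain ⟨x, hx, hsub⟩ := exists_subset_minFace subset_rfl hne convex_polyhedron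
      exact ⟨x, hx, hsub.antisymm fun y hy => hy.1⟩
    · have hconv : Convex ℝ {y ∈ polyhedron φ d | c ⬝ᵥ y = s} :=
        convex_polyhedron.inter (convex_hyperplane (dotProductEquiv ℝ n c).isLinear s)
      obtain ⟨x, ⟨hx, hxs⟩, hsub⟩ := exists_subset_minFace (Set.sep_subset _ _) ⟨y, hy, hys⟩ hconv
      exact ⟨x, hx, setOf_dotProduct_eq_minFace hle hx hxs hsub⟩
  · rintro ⟨x, hx, rfl⟩
    exact isFace_minFace hx

theorem isVertex_iff {v : n → ℝ} :
    IsVertex (polyhedron φ d) v ↔ v ∈ polyhedron φ d ∧ tightKer φ d v = ⊥ := by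
  constructor
  · intro h
    have hv : v ∈ polyhedron φ d := by
      rcases h with h | ⟨c, s, -, -, h⟩
      · exact h ▸ Set.mem_singleton v
      · exact (h ▸ Set.mem_singleton v : v ∈ {y ∈ polyhedron φ d | c ⬝ᵥ y = s}).1
    obtain ⟨x, hx, hface⟩ := (isFace_iff ⟨v, hv⟩).1 h
    obtain rfl : x = v := Set.mem_singleton_iff.1 (hface ▸ self_mem_minFace hx)
    refine ⟨hv, ?_⟩
    rw [← direction_affineSpan_minFace hx, ← hface, direction_affineSpan, vectorSpan_singleton]
  · rintro ⟨hv, hker⟩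
    have hface : minFace φ d v = {v} :=
      Set.eq_singleton_iff_unique_mem.2 ⟨self_mem_minFace hv, fun y hy =>
        sub_eq_zero.1 <| (Submodule.mem_bot ℝ).1 <| hker ▸ sub_mem_tightKer hy⟩
    exact (hface ▸ isFace_minFace hv : IsFace (polyhedron φ d) {v})

theorem isEdge_iff (hne : (polyhedron φ d).Nonempty) {F : Set (n → ℝ)} :
    IsEdge (polyhedron φ d) F ↔
      ∃ x ∈ polyhedron φ d, F = minFace φ d x ∧ ∃ g ≠ 0, tightKer φ d x = ℝ ∙ g := by
  simp only [IsEdge, isFace_iff hne, ← finrank_eq_one_iff_exists_eq_span_singleton]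
  constructor
  · rintro ⟨⟨x, hx, rfl⟩, hdim⟩
    exact ⟨x, hx, rfl, spanDim_minFace hx ▸ hdim⟩
  · rintro ⟨x, hx, rfl, hdim⟩
    exact ⟨⟨x, hx, rfl⟩, (spanDim_minFace hx).trans hdim⟩

theorem isEdgeDirection_iff (hne : (polyhedron φ d).Nonempty) :
    IsEdgeDirection (polyhedron φ d) g ↔
      g ≠ 0 ∧ ∃ x ∈ polyhedron φ d, tightKer φ d x = ℝ ∙ g := by
  refine and_congr_right fun hg => ?_
  constructor
  · rintro ⟨F, hF, hgF⟩
    obtain ⟨x, hx, rfl, h, -, hker⟩ := (isEdge_iff hne).1 hF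
    rw [direction_affineSpan_minFace hx, hker] at hgF
    obtain ⟨t, ht, rfl⟩ := exists_ne_zero_eq_smul_of_mem_span hg hgF
    refine ⟨x, hx, ?_⟩
    rw [hker, Submodule.span_singleton_smul_eq ht.isUnit]
  · rintro ⟨x, hx, hker⟩
    refine ⟨minFace φ d x, (isEdge_iff hne).2 ⟨x, hx, rfl, g, hg, hker⟩, ?_⟩
    rw [direction_affineSpan_minFace hx, hker]
    exact Submodule.mem_span_singleton_self g

end Faces

section Irredundant

/-- The system `φ k x ≤ d k` is an irredundant description of a full-dimensional pointed
polyhedron: it has a strict solution, each row admits a point at which it is the only tight one,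
and the rows separate points. -/
structure IsIrredundantSystem {ι E : Type*} [AddCommGroup E] [Module ℝ E]
    (φ : ι → Module.Dual ℝ E) (d : ι → ℝ) : Prop where
  exists_strict : ∃ x, ∀ k, φ k x < d k
  exists_tightRows_eq_singleton : ∀ k, ∃ x ∈ polyhedron φ d, tightRows φ d x = {k}
  eq_zero_of_forall_eq_zero : ∀ x, (∀ k, φ k x = 0) → x = 0

namespace IsIrredundantSystem

variable {ι n : Type*} {φ : ι → Module.Dual ℝ (n → ℝ)} {d : ι → ℝ}

theorem nonempty (h : IsIrredundantSystem φ d) : (polyhedron φ d).Nonempty :=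
  let ⟨x, hx⟩ := h.exists_strict
  ⟨x, fun k => (hx k).le⟩

theorem tightKer_zero_eq_bot (h : IsIrredundantSystem φ d) : tightKer φ 0 0 = ⊥ :=
  (Submodule.eq_bot_iff _).2 fun x hx =>
    h.eq_zero_of_forall_eq_zero x fun k => mem_tightKer.1 hx k (map_zero (φ k))

theorem pointedSet [Fintype n] (h : IsIrredundantSystem φ d) : PointedSet (polyhedron φ d) := by
  intro x v hline
  refine h.eq_zero_of_forall_eq_zero v fun k => ?_
  by_contra hk
  have hle := hline ((d k - φ k x + 1) / φ k v) k
  rw [map_add, map_smul, smul_eq_mul, div_mul_cancel₀ _ hk] at hle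
  linarith

theorem facet_injective (h : IsIrredundantSystem φ d) :
    Function.Injective fun k => {x ∈ polyhedron φ d | φ k x = d k} := by
  intro k l hkl
  obtain ⟨x, hx, hxk⟩ := h.exists_tightRows_eq_singleton k
  have hmem : x ∈ {x ∈ polyhedron φ d | φ l x = d l} :=
    hkl.subset ⟨hx, hxk.ge rfl⟩
  exact (Set.mem_singleton_iff.1 (hxk.le hmem.2)).symm

theorem finrank_ker_add_one [Fintype n] (h : IsIrredundantSystem φ d) (k : ι) :
    Module.finrank ℝ (LinearMap.ker (φ k)) + 1 = Fintype.card n := by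
  have hk : φ k ≠ 0 := by
    intro h0
    obtain ⟨x, hx⟩ := h.exists_strict
    obtain ⟨y, -, hy⟩ := h.exists_tightRows_eq_singleton k
    have hyk : φ k y = d k := hy.ge rfl
    have hxk := hx k
    simp only [h0, LinearMap.zero_apply] at hxk hyk
    exact hxk.ne hyk
  rw [Module.Dual.finrank_ker_add_one_of_ne_zero hk, Module.finrank_fintype_fun_eq_card]

variable [Finite ι]

theorem affineSpan_eq_top (h : IsIrredundantSystem φ d) : affineSpan ℝ (polyhedron φ d) = ⊤ := by
  obtain ⟨x, hx⟩ := h.exists_strict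
  have htight : tightRows φ d x = ∅ := Set.eq_empty_of_forall_notMem fun k => (hx k).ne
  have hface : minFace φ d x = polyhedron φ d := by simp [minFace, htight]
  rw [← AffineSubspace.direction_eq_top_iff_of_nonempty (h.nonempty.affineSpan ℝ), ← hface,
    direction_affineSpan_minFace fun k => (hx k).le, tightKer_eq_top htight]

variable [Fintype n]

theorem spanDim_eq (h : IsIrredundantSystem φ d) : spanDim (polyhedron φ d) = Fintype.card n := by
  rw [spanDim, h.affineSpan_eq_top, AffineSubspace.direction_top, finrank_top,
    Module.finrank_fintype_fun_eq_card]

theorem isFacet_iff (h : IsIrredundantSystem φ d) {F : Set (n → ℝ)} :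
    IsFacet (polyhedron φ d) F ↔ ∃ k, F = {x ∈ polyhedron φ d | φ k x = d k} := by
  rw [IsFacet, isFace_iff h.nonempty, h.spanDim_eq]
  constructor
  · rintro ⟨⟨x, hx, rfl⟩, hdim⟩
    rw [spanDim_minFace hx] at hdim
    have htight : (tightRows φ d x).Nonempty := by
      by_contra! hempty
      rw [tightKer_eq_top hempty, finrank_top, Module.finrank_fintype_fun_eq_card] at hdim
      lia
    obtain ⟨k, hk⟩ := htight
    have hker : tightKer φ d x = LinearMap.ker (φ k) :=
      Submodule.eq_of_le_of_finrank_eq (iInf₂_le k hk) (by have := h.finrank_ker_add_one k; lia)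
    refine ⟨k, Set.Subset.antisymm (fun y hy => ⟨hy.1, hy.2 hk⟩) ?_⟩
    rintro y ⟨hy, hyk⟩
    have hsub : y - x ∈ tightKer φ d x := by
      rw [hker, LinearMap.mem_ker, map_sub, hyk, hk, sub_self]
    refine ⟨hy, fun l hl => ?_⟩
    have hl0 := mem_tightKer.1 hsub l hl
    rw [map_sub, sub_eq_zero] at hl0
    exact hl0.trans hl
  · rintro ⟨k, rfl⟩
    obtain ⟨x, hx, hxk⟩ := h.exists_tightRows_eq_singleton k
    have hface : {y ∈ polyhedron φ d | φ k y = d k} = minFace φ d x := by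
      rw [minFace, hxk]
      simp only [Set.singleton_subset_iff]
      rfl
    refine ⟨⟨x, hx, hface⟩, ?_⟩
    rw [hface, spanDim_minFace hx, tightKer_eq_ker hxk, h.finrank_ker_add_one k]

theorem ncard_isFacet (h : IsIrredundantSystem φ d) :
    {F | IsFacet (polyhedron φ d) F}.ncard = Nat.card ι := by
  rw [← Set.ncard_range_of_injective h.facet_injective]
  congr 1
  ext F
  simp [h.isFacet_iff, eq_comm]

theorem ncard_isFacet_mem (h : IsIrredundantSystem φ d) {v : n → ℝ} (hv : v ∈ polyhedron φ d) :
    {F | IsFacet (polyhedron φ d) F ∧ v ∈ F}.ncard = (tightRows φ d v).ncard := by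
  rw [← Set.ncard_image_of_injective _ h.facet_injective]
  congr 1
  ext F
  simp only [h.isFacet_iff, Set.mem_image]
  constructor
  · rintro ⟨⟨k, rfl⟩, -, hk⟩
    exact ⟨k, hk, rfl⟩
  · rintro ⟨k, hk, rfl⟩
    exact ⟨⟨k, rfl⟩, hv, hk⟩

end IsIrredundantSystem

section Matrix

variable {ι n q : Type*} [Fintype n] [DecidableEq n]

/-- The matrix whose rows are the coefficient vectors of the linear forms `φ k`. -/
def rowMatrix (φ : ι → Module.Dual ℝ (n → ℝ)) : Matrix ι n ℝ :=
  LinearMap.toMatrix' (LinearMap.pi φ)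

theorem rowMatrix_mulVec (φ : ι → Module.Dual ℝ (n → ℝ)) (x : n → ℝ) (k : ι) :
    (rowMatrix φ *ᵥ x) k = φ k x := by
  rw [rowMatrix, LinearMap.toMatrix'_mulVec, LinearMap.pi_apply]

theorem circuits_rowMatrix {p : Type*} {φ : ι → Module.Dual ℝ (n → ℝ)}
    (hφ : ∀ x, (∀ k, φ k x = 0) → x = 0) (e : q ≃ ι) :
    circuits (0 : Matrix p n ℝ) (rowMatrix (φ ∘ e)) = {g | IsCircuit φ g} := by
  have hsupp (x y : n → ℝ) : {i | (rowMatrix (φ ∘ e) *ᵥ x) i ≠ 0} ⊆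
      {i | (rowMatrix (φ ∘ e) *ᵥ y) i ≠ 0} ↔ x ∈ tightKer φ 0 y := by
    simp [rowMatrix_mulVec, mem_tightKer, not_imp_not, e.surjective.forall]
  ext g
  simp only [circuits, hsupp, zero_mulVec, true_and, forall_const, Set.mem_ofPred_eq, IsCircuit]
  refine and_congr_right fun hg => ⟨fun hmin => le_antisymm ?_ ?_, fun hker y hy0 hy => ?_⟩
  · intro y hy
    obtain ⟨k, hk⟩ : ∃ k, φ k g ≠ 0 := by
      by_contra! h0
      exact hg (hφ g h0)
    set z := y - (φ k y / φ k g) • g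
    have hz : z ∈ tightKer φ 0 g := sub_mem hy (Submodule.smul_mem _ _ self_mem_tightKer_zero)
    have hzk : φ k z = 0 := by simp [z, hk]
    have hz0 : z = 0 := by
      by_contra hne
      exact hk (mem_tightKer.1 (hmin z hne hz) k hzk)
    exact Submodule.mem_span_singleton.2 ⟨_, (sub_eq_zero.1 hz0).symm⟩
  · exact (Submodule.span_singleton_le_iff_mem _ _).2 self_mem_tightKer_zero
  · obtain ⟨t, -, rfl⟩ := exists_ne_zero_eq_smul_of_mem_span hy0 (hker ▸ hy)
    exact Submodule.smul_mem _ _ self_mem_tightKer_zero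

theorem IsIrredundantSystem.irredundant [Finite ι] {p : Type*} {φ : ι → Module.Dual ℝ (n → ℝ)}
    {d : ι → ℝ} (h : IsIrredundantSystem φ d) (e : q ≃ ι) :
    Irredundant (0 : Matrix p n ℝ) 0 (rowMatrix (φ ∘ e)) (d ∘ e) (polyhedron φ d) := by
  refine ⟨?_, ?_, fun i => h.isFacet_iff.2 ⟨e i, ?_⟩⟩
  · ext x
    simp [polySet, polyhedron, Pi.le_def, rowMatrix_mulVec, e.surjective.forall]
  · simp [h.affineSpan_eq_top]
  · simp [rowMatrix_mulVec]

end Matrix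

theorem IsIrredundantSystem.exists_irredundant {ι n : Type*} [Finite ι] [Fintype n]
    {φ : ι → Module.Dual ℝ (n → ℝ)} {d : ι → ℝ} (h : IsIrredundantSystem φ d) :
    ∃ (p q : ℕ) (A : Matrix (Fin p) n ℝ) (b : Fin p → ℝ) (B : Matrix (Fin q) n ℝ)
      (c : Fin q → ℝ), Irredundant A b B c (polyhedron φ d) ∧
        circuits A B = {g | IsCircuit φ g} := by
  classical
  let e := (Finite.equivFin ι).symm
  exact ⟨0, Nat.card ι, 0, 0, rowMatrix (φ ∘ e), d ∘ e, h.irredundant e,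
    circuits_rowMatrix h.eq_zero_of_forall_eq_zero e⟩

theorem IsIrredundantSystem.exists_irredundant_extension {ι κ : Type*} [Finite ι] [Finite κ]
    {n m : ℕ} {φ : ι → Module.Dual ℝ (Fin n → ℝ)} {d : ι → ℝ}
    {ψ : κ → Module.Dual ℝ (Fin m → ℝ)} {e : κ → ℝ} {π : (Fin m → ℝ) →ₗ[ℝ] (Fin n → ℝ)}
    {X : Set (Fin n → ℝ) → Set (Fin m → ℝ) → Prop} (hφ : IsIrredundantSystem φ d)
    (hψ : IsIrredundantSystem ψ e) (hπ : π '' polyhedron ψ e = polyhedron φ d)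
    (hmiss : ¬ {g | IsCircuit φ g} ⊆ π '' {y | IsCircuit ψ y})
    (hinter : {g | IsCircuit φ g} ∩ π '' {y | IsCircuit ψ y} =
      {g | IsEdgeDirection (polyhedron φ d) g})
    (hX : X (polyhedron φ d) (polyhedron ψ e)) :
    ∃ (pP qP pQ qQ : ℕ)
      (AP : Matrix (Fin pP) (Fin n) ℝ) (bP : Fin pP → ℝ)
      (BP : Matrix (Fin qP) (Fin n) ℝ) (dP : Fin qP → ℝ)
      (AQ : Matrix (Fin pQ) (Fin m) ℝ) (bQ : Fin pQ → ℝ)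
      (BQ : Matrix (Fin qQ) (Fin m) ℝ) (dQ : Fin qQ → ℝ)
      (P : Set (Fin n → ℝ)) (Q : Set (Fin m → ℝ)) (π : (Fin m → ℝ) →ₗ[ℝ] (Fin n → ℝ)),
      Irredundant AP bP BP dP P ∧ Irredundant AQ bQ BQ dQ Q ∧
      PointedSet P ∧ PointedSet Q ∧ spanDim P = n ∧ spanDim Q = m ∧ π '' Q = P ∧
      ¬ circuits AP BP ⊆ π '' circuits AQ BQ ∧
      circuits AP BP ∩ π '' circuits AQ BQ = {g | IsEdgeDirection P g} ∧ X P Q := by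
  obtain ⟨pP, qP, AP, bP, BP, dP, hP, hcP⟩ := hφ.exists_irredundant
  obtain ⟨pQ, qQ, AQ, bQ, BQ, dQ, hQ, hcQ⟩ := hψ.exists_irredundant
  exact ⟨pP, qP, pQ, qQ, AP, bP, BP, dP, AQ, bQ, BQ, dQ, _, _, π, hP, hQ, hφ.pointedSet,
    hψ.pointedSet, hφ.spanDim_eq.trans (Fintype.card_fin n),
    hψ.spanDim_eq.trans (Fintype.card_fin m), hπ, hcP ▸ hcQ ▸ hmiss, hcP ▸ hcQ ▸ hinter, hX⟩

end Irredundant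

section Cones

variable {T E : Type*} [AddCommGroup E] [Module ℝ E]

/-- The rows of the cone `{x : 0 ≤ L x}`, to be used with right-hand side `0`. -/
def coneRow (L : E →ₗ[ℝ] (T → ℝ)) (t : T) : Module.Dual ℝ E :=
  -(LinearMap.proj t ∘ₗ L)

/-- The rows of the truncated cone `{x : 0 ≤ L x, ∑ t, L x t ≤ 1}`, to be used with right-hand
side `truncBound`; the row `none` is the truncating one. -/
def truncRow [Fintype T] (L : E →ₗ[ℝ] (T → ℝ)) : Option T → Module.Dual ℝ E
  | none => ∑ t, LinearMap.proj t ∘ₗ L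
  | some t => coneRow L t

/-- The right-hand side of the system `truncRow`. -/
def truncBound : Option T → ℝ
  | none => 1
  | some _ => 0

variable {L : E →ₗ[ℝ] (T → ℝ)} {x g : E}

@[simp]
theorem coneRow_apply (t : T) : coneRow L t x = -L x t := rfl

theorem mem_polyhedron_coneRow : x ∈ polyhedron (coneRow L) 0 ↔ ∀ t, 0 ≤ L x t := by
  simp [polyhedron]

theorem mem_tightKer_coneRow :
    g ∈ tightKer (coneRow L) 0 x ↔ ∀ t, L x t = 0 → L g t = 0 := by
  simp [mem_tightKer]

@[simp]
theorem truncBound_none : truncBound (none : Option T) = 1 := rfl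

@[simp]
theorem truncBound_some (t : T) : truncBound (some t) = 0 := rfl

variable [Fintype T]

@[simp]
theorem truncRow_none : truncRow L none x = ∑ t, L x t := by
  simp [truncRow]

@[simp]
theorem truncRow_some (t : T) : truncRow L (some t) x = -L x t := rfl

theorem mem_polyhedron_truncRow :
    x ∈ polyhedron (truncRow L) truncBound ↔ ∑ t, L x t ≤ 1 ∧ ∀ t, 0 ≤ L x t := by
  simp [polyhedron, Option.forall]

theorem tightKer_truncRow_zero_le : tightKer (truncRow L) 0 g ≤ tightKer (coneRow L) 0 g :=
  fun _ hy => mem_tightKer.2 fun t ht => mem_tightKer.1 hy (some t) ht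

theorem IsCircuit.truncRow (hg : IsCircuit (coneRow L) g) : IsCircuit (truncRow L) g :=
  isCircuit_of_tightKer_le hg.1 (tightKer_truncRow_zero_le.trans hg.2.le)

theorem sum_map_smul (c : ℝ) : ∑ t, L (c • x) t = c * ∑ t, L x t := by
  simp [Finset.mul_sum]

theorem IsIrredundantSystem.truncRow [Nonempty T] (h : IsIrredundantSystem (coneRow L) 0) :
    IsIrredundantSystem (truncRow L) truncBound := by
  obtain ⟨x, hx⟩ := h.exists_strict
  replace hx : ∀ t, 0 < L x t := by simpa using hx
  have hsum : 0 < ∑ t, L x t := Finset.sum_pos (fun t _ => hx t) Finset.univ_nonempty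
  have hscale {s : ℝ} (hs : 0 ≤ s) : 0 < (s + 1)⁻¹ ∧ (s + 1)⁻¹ * s < 1 :=
    ⟨by positivity, by rw [inv_mul_lt_one₀ (by positivity)]; linarith⟩
  refine ⟨⟨(∑ t, L x t + 1)⁻¹ • x, ?_⟩, ?_, fun y hy => h.eq_zero_of_forall_eq_zero y ?_⟩
  · obtain ⟨hpos, hlt⟩ := hscale hsum.le
    simp only [Option.forall, truncRow_none, truncRow_some, truncBound_none, truncBound_some,
      sum_map_smul]
    exact ⟨hlt, fun t => by simpa using mul_pos hpos (hx t)⟩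
  · rintro (_ | t)
    · have hone : ∑ t, L ((∑ t, L x t)⁻¹ • x) t = 1 := by
        rw [sum_map_smul, inv_mul_cancel₀ hsum.ne']
      have hpos (t : T) : 0 < L ((∑ t, L x t)⁻¹ • x) t := by
        simpa using mul_pos (inv_pos.2 hsum) (hx t)
      refine ⟨_, mem_polyhedron_truncRow.2 ⟨hone.le, fun t => (hpos t).le⟩, ?_⟩
      ext (_ | t)
      · exact iff_of_true (truncRow_none.trans hone) rfl
      · simpa [tightRows] using (hpos t).ne'
    · obtain ⟨y, hy, hyt⟩ := h.exists_tightRows_eq_singleton t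
      rw [mem_polyhedron_coneRow] at hy
      obtain ⟨hpos, hlt⟩ := hscale (Finset.sum_nonneg fun t _ => hy t)
      rw [← sum_map_smul] at hlt
      refine ⟨_, mem_polyhedron_truncRow.2 ⟨hlt.le, fun s => ?_⟩, ?_⟩
      · simpa using mul_nonneg hpos.le (hy s)
      · ext (_ | s)
        · exact iff_of_false (fun hs => hlt.ne (truncRow_none.symm.trans hs)) (by simp)
        · have hs := Set.ext_iff.1 hyt s
          simpa [tightRows, hpos.ne'] using hs
  · exact fun t => hy (some t)

theorem isBounded_polyhedron_truncRow {n : Type*} [Finite n] {L : (n → ℝ) →ₗ[ℝ] (T → ℝ)}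
    (hL : Function.Injective L) : Bornology.IsBounded (polyhedron (truncRow L) truncBound) := by
  cases nonempty_fintype n
  obtain ⟨K, -, hK⟩ := L.exists_antilipschitzWith (LinearMap.ker_eq_bot.2 hL)
  refine (hK.isBounded_preimage (Metric.isBounded_Icc (0 : T → ℝ) 1)).subset fun x hx => ?_
  obtain ⟨hsum, hnonneg⟩ := mem_polyhedron_truncRow.1 hx
  exact ⟨hnonneg, fun t =>
    (Finset.single_le_sum (fun s _ => hnonneg s) (Finset.mem_univ t)).trans hsum⟩

end Cones

section OrthantSimplex

variable {M : Type*}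

/-- The rows of the nonnegative orthant `{y : 0 ≤ y}`, to be used with right-hand side `0`. -/
abbrev orthantRow (M : Type*) : M → Module.Dual ℝ (M → ℝ) :=
  coneRow LinearMap.id

/-- The rows of the simplex `{y : 0 ≤ y, ∑ i, y i ≤ 1}`, to be used with right-hand side
`truncBound`. -/
abbrev simplexRow (M : Type*) [Fintype M] : Option M → Module.Dual ℝ (M → ℝ) :=
  truncRow LinearMap.id

theorem isIrredundantSystem_orthantRow : IsIrredundantSystem (orthantRow M) 0 where
  exists_strict := ⟨1, by simp⟩
  exists_tightRows_eq_singleton i := by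
    classical
    refine ⟨1 - Pi.single i 1, mem_polyhedron_coneRow.2 fun j => ?_, ?_⟩
    · rcases eq_or_ne j i with rfl | hj <;> simp [*]
    · ext j
      rcases eq_or_ne j i with rfl | hj <;> simp [tightRows, *]
  eq_zero_of_forall_eq_zero y hy := funext fun i => by simpa using hy i

theorem isCircuit_orthantRow_single [DecidableEq M] (i : M) :
    IsCircuit (orthantRow M) (Pi.single i 1) := by
  refine isCircuit_of_tightKer_le (by simp) fun y hy => Submodule.mem_span_singleton.2 ⟨y i, ?_⟩
  rw [mem_tightKer_coneRow] at hy
  ext j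
  rcases eq_or_ne j i with rfl | hj
  · simp
  · simpa [hj] using (hy j (by simp [hj])).symm

theorem single_mem_tightKer_coneRow [DecidableEq M] {y : M → ℝ} {i : M} (hi : y i ≠ 0) :
    Pi.single i 1 ∈ tightKer (orthantRow M) 0 y := by
  refine mem_tightKer_coneRow.2 fun j hj => Pi.single_eq_of_ne ?_ 1
  rintro rfl
  exact hi hj

theorem isCircuit_orthantRow_iff [DecidableEq M] {y : M → ℝ} :
    IsCircuit (orthantRow M) y ↔ ∃ i, ∃ t : ℝ, t ≠ 0 ∧ y = t • Pi.single i 1 := by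
  constructor
  · intro hy
    obtain ⟨i, hi⟩ := Function.ne_iff.1 hy.1
    exact ⟨i, hy.exists_eq_smul (by simp) (single_mem_tightKer_coneRow hi)⟩
  · rintro ⟨i, t, ht, rfl⟩
    exact (isCircuit_orthantRow_single i).smul ht

theorem tightRows_orthantRow_eq_univ {v : M → ℝ} (hv : tightKer (orthantRow M) 0 v = ⊥) :
    tightRows (orthantRow M) 0 v = Set.univ := by
  classical
  refine Set.eq_univ_of_forall fun i => ?_
  by_contra hi
  have hvi : v i ≠ 0 := fun h0 => hi (by simp [tightRows, h0])
  have hmem := single_mem_tightKer_coneRow hvi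
  simp [hv] at hmem

/-- The vertices of the simplex, indexed so that `simplexVertex k` is opposite to the facet of
the row `k`. -/
def simplexVertex [DecidableEq M] : Option M → M → ℝ
  | none => 0
  | some i => Pi.single i 1

variable [Fintype M]

theorem sum_simplexRow (y : M → ℝ) : ∑ k, simplexRow M k y = 0 := by
  simp [Fintype.sum_option]

theorem sum_truncBound : ∑ k : Option M, truncBound k = 1 := by
  simp [Fintype.sum_option]

theorem exists_simplexRow_ne_truncBound (y : M → ℝ) : ∃ k, simplexRow M k y ≠ truncBound k := by
  by_contra! h
  simpa [h, sum_truncBound] using sum_simplexRow y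

theorem simplexRow_ext {y z : M → ℝ} (h : ∀ k, simplexRow M k y = simplexRow M k z) : y = z :=
  funext fun i => by simpa using h (some i)

variable [DecidableEq M]

theorem simplexRow_simplexVertex (k i : Option M) :
    simplexRow M k (simplexVertex i) = truncBound k - if k = i then 1 else 0 := by
  rcases k with _ | k <;> rcases i with _ | i <;> simp [simplexVertex, Pi.single_apply]

theorem simplexRow_simplexVertex_sub (k i j : Option M) :
    simplexRow M k (simplexVertex i - simplexVertex j) =
      (if k = j then 1 else 0) - if k = i then 1 else 0 := by
  rw [map_sub, simplexRow_simplexVertex, simplexRow_simplexVertex]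
  ring

theorem simplexVertex_mem (i : Option M) :
    simplexVertex i ∈ polyhedron (simplexRow M) truncBound := fun k => by
  rw [simplexRow_simplexVertex]
  split_ifs <;> simp

theorem eq_sum_slack_smul_simplexVertex (y : M → ℝ) :
    y = ∑ k, (truncBound k - simplexRow M k y) • simplexVertex k := by
  ext i
  simp [Fintype.sum_option, simplexVertex, Finset.sum_apply, Pi.single_apply]

theorem simplexVertex_sub_mem_tightKer {d : Option M → ℝ} {y : M → ℝ} {i j : Option M}
    (hi : simplexRow M i y ≠ d i) (hj : simplexRow M j y ≠ d j) :
    simplexVertex i - simplexVertex j ∈ tightKer (simplexRow M) d y := by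
  refine mem_tightKer.2 fun k hk => ?_
  have hki : k ≠ i := by rintro rfl; exact hi hk
  have hkj : k ≠ j := by rintro rfl; exact hj hk
  simp [simplexRow_simplexVertex_sub, hki, hkj]

theorem simplexVertex_sub_self_mem_tightKer {y : M → ℝ} {i : Option M}
    (hi : simplexRow M i y ≠ truncBound i) :
    simplexVertex i - y ∈ tightKer (simplexRow M) truncBound y := by
  refine mem_tightKer.2 fun k hk => ?_
  have hki : k ≠ i := by rintro rfl; exact hi hk
  rw [map_sub, simplexRow_simplexVertex, if_neg hki, hk, sub_zero, sub_self]

theorem isCircuit_simplexVertex_sub {i j : Option M} (hij : i ≠ j) :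
    IsCircuit (simplexRow M) (simplexVertex i - simplexVertex j) := by
  refine isCircuit_of_tightKer_le (fun h0 => ?_) fun y hy => ?_
  · simpa [h0, hij] using simplexRow_simplexVertex_sub i i j
  · have hother (k : Option M) (hk : k ≠ i ∧ k ≠ j) : simplexRow M k y = 0 :=
      mem_tightKer.1 hy k (by simp [simplexRow_simplexVertex_sub, hk.1, hk.2])
    have hadd : simplexRow M i y + simplexRow M j y = 0 := by
      rw [← Fintype.sum_eq_add i j hij hother, sum_simplexRow]
    refine Submodule.mem_span_singleton.2 ⟨simplexRow M j y, simplexRow_ext fun k => ?_⟩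
    rw [map_smul, simplexRow_simplexVertex_sub, smul_eq_mul]
    rcases eq_or_ne k i with rfl | hki
    · rw [if_neg hij, if_pos rfl]
      linarith
    rcases eq_or_ne k j with rfl | hkj
    · rw [if_pos rfl, if_neg hki]
      ring
    · rw [if_neg hki, if_neg hkj, hother k ⟨hki, hkj⟩]
      ring

theorem isCircuit_simplexRow_iff {y : M → ℝ} :
    IsCircuit (simplexRow M) y ↔
      ∃ i j, i ≠ j ∧ ∃ t : ℝ, t ≠ 0 ∧ y = t • (simplexVertex i - simplexVertex j) := by
  constructor
  · intro hy
    obtain ⟨i, hi⟩ : ∃ i, simplexRow M i y ≠ 0 := by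
      by_contra! h
      exact hy.1 (simplexRow_ext fun k => by rw [h, map_zero])
    obtain ⟨j, hji, hj⟩ : ∃ j ≠ i, simplexRow M j y ≠ 0 := by
      by_contra! h
      exact hi ((Fintype.sum_eq_single i h).symm.trans (sum_simplexRow y))
    exact ⟨i, j, hji.symm, hy.exists_eq_smul (isCircuit_simplexVertex_sub hji.symm).1
      (simplexVertex_sub_mem_tightKer hi hj)⟩
  · rintro ⟨i, j, hij, t, ht, rfl⟩
    exact (isCircuit_simplexVertex_sub hij).smul ht

end OrthantSimplex

section SimpleVertices

variable {M : Type*} [Fintype M] {v : M → ℝ}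

theorem ncard_tightRows_simplexRow (hv : tightKer (simplexRow M) truncBound v = ⊥) :
    (tightRows (simplexRow M) truncBound v).ncard = Fintype.card M := by
  classical
  obtain ⟨i, hi⟩ := exists_simplexRow_ne_truncBound v
  have htight : tightRows (simplexRow M) truncBound v = {i}ᶜ := by
    ext j
    refine ⟨fun hj => ?_, fun hji => ?_⟩
    · rintro rfl
      exact hi hj
    · by_contra hj
      have hmem := simplexVertex_sub_mem_tightKer hi hj
      rw [hv, Submodule.mem_bot] at hmem
      exact (isCircuit_simplexVertex_sub fun hij => hji hij.symm).1 hmem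
  rw [htight, Set.ncard_compl, Set.ncard_singleton]
  simp

theorem ncard_isFacet_mem_orthant (hv : IsVertex (polyhedron (orthantRow M) 0) v) :
    {F | IsFacet (polyhedron (orthantRow M) 0) F ∧ v ∈ F}.ncard = Fintype.card M := by
  obtain ⟨hmem, hker⟩ := isVertex_iff.1 hv
  rw [isIrredundantSystem_orthantRow.ncard_isFacet_mem hmem, tightRows_orthantRow_eq_univ hker,
    Set.ncard_univ, Nat.card_eq_fintype_card]

theorem ncard_isFacet_mem_simplex [Nonempty M]
    (hv : IsVertex (polyhedron (simplexRow M) truncBound) v) :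
    {F | IsFacet (polyhedron (simplexRow M) truncBound) F ∧ v ∈ F}.ncard = Fintype.card M := by
  obtain ⟨hmem, hker⟩ := isVertex_iff.1 hv
  rw [isIrredundantSystem_orthantRow.truncRow.ncard_isFacet_mem hmem,
    ncard_tightRows_simplexRow hker]

end SimpleVertices

section Projections

variable {ι M n E : Type*} [AddCommGroup E] [Module ℝ E] [Fintype n]

section Orthant

theorem exists_single_mem_tightKer [Finite M] [DecidableEq M] {φ : ι → Module.Dual ℝ E}
    {π : (M → ℝ) →ₗ[ℝ] E} (hπ : π '' polyhedron (orthantRow M) 0 = polyhedron φ 0) {x : E}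
    (hx : x ∈ polyhedron φ 0) (hx0 : x ≠ 0) :
    ∃ i, π (Pi.single i 1) ≠ 0 ∧ π (Pi.single i 1) ∈ tightKer φ 0 x := by
  cases nonempty_fintype M
  obtain ⟨y, hy, rfl⟩ := hπ.ge hx
  obtain ⟨i, -, hi⟩ : ∃ i ∈ Finset.univ, y i • π (Pi.single i 1) ≠ 0 := by
    refine Finset.exists_ne_zero_of_sum_ne_zero ?_
    simp_rw [← map_smul, ← map_sum, ← pi_eq_sum_univ' y]
    exact hx0
  refine ⟨i, right_ne_zero_of_smul hi, map_tightKer_le ?_ hy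
    (Submodule.mem_map_of_mem (single_mem_tightKer_coneRow (left_ne_zero_of_smul hi)))⟩
  exact Set.mapsTo_iff_image_subset.2 hπ.le

theorem map_single_mem_polyhedron [DecidableEq M] {φ : ι → Module.Dual ℝ E}
    {π : (M → ℝ) →ₗ[ℝ] E} (hπ : π '' polyhedron (orthantRow M) 0 = polyhedron φ 0) (i : M) :
    π (Pi.single i 1) ∈ polyhedron φ 0 :=
  hπ.le (Set.mem_image_of_mem π (mem_polyhedron_coneRow.2
    (Pi.single_nonneg.2 zero_le_one : (0 : M → ℝ) ≤ Pi.single i 1)))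

theorem isCircuit_inter_image_orthant [Finite ι] [Finite M] {φ : ι → Module.Dual ℝ (n → ℝ)}
    {π : (M → ℝ) →ₗ[ℝ] (n → ℝ)} (hφ : tightKer φ 0 0 = ⊥)
    (hπ : π '' polyhedron (orthantRow M) 0 = polyhedron φ 0) :
    {g | IsCircuit φ g} ∩ π '' {y | IsCircuit (orthantRow M) y} =
      {g | IsEdgeDirection (polyhedron φ 0) g} := by
  classical
  have hne : (polyhedron φ 0).Nonempty := ⟨0, zero_mem_polyhedron_zero⟩
  ext g
  simp only [Set.mem_inter_iff, Set.mem_image, Set.mem_ofPred_eq, isCircuit_orthantRow_iff,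
    isEdgeDirection_iff hne]
  constructor
  · rintro ⟨hg, _, ⟨i, t, ht, rfl⟩, rfl⟩
    refine ⟨hg.1, π (Pi.single i 1), map_single_mem_polyhedron hπ i, ?_⟩
    rw [map_smul] at hg ⊢
    have hray := hg.smul (inv_ne_zero ht)
    rw [inv_smul_smul₀ ht] at hray
    rw [hray.2, Submodule.span_singleton_smul_eq ht.isUnit]
  · rintro ⟨hg, x, hx, hker⟩
    have hx0 : x ≠ 0 := by
      rintro rfl
      exact hg (Submodule.span_singleton_eq_bot.1 (hker.symm.trans hφ))
    obtain ⟨i, hi, hmem⟩ := exists_single_mem_tightKer hπ hx hx0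
    obtain ⟨t, ht, rfl⟩ := exists_ne_zero_eq_smul_of_mem_span hi (hker ▸ hmem)
    exact ⟨isCircuit_of_tightKer_eq hg hker, t • Pi.single i 1, ⟨i, t, ht, rfl⟩, map_smul π t _⟩

end Orthant

section Simplex

variable [Fintype M] [DecidableEq M]

theorem map_eq_of_forall_map_simplexVertex_eq {π : (M → ℝ) →ₗ[ℝ] E} {y : M → ℝ} {c : E}
    (h : ∀ i, simplexRow M i y ≠ truncBound i → π (simplexVertex i) = c) : π y = c := by
  have hterm (k : Option M) : (truncBound k - simplexRow M k y) • π (simplexVertex k) =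
      (truncBound k - simplexRow M k y) • c := by
    by_cases hk : simplexRow M k y = truncBound k
    · rw [hk, sub_self, zero_smul, zero_smul]
    · rw [h k hk]
  conv_lhs => rw [eq_sum_slack_smul_simplexVertex y]
  simp only [map_sum, map_smul, hterm]
  rw [← Finset.sum_smul, Finset.sum_sub_distrib, sum_truncBound, sum_simplexRow, sub_zero,
    one_smul]

theorem map_simplexVertex_sub_mem_tightKer {φ : ι → Module.Dual ℝ E} {d : ι → ℝ}
    {π : (M → ℝ) →ₗ[ℝ] E} (hπ : π '' polyhedron (simplexRow M) truncBound = polyhedron φ d)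
    {y : M → ℝ} (hy : y ∈ polyhedron (simplexRow M) truncBound) {i : Option M}
    (hi : simplexRow M i y ≠ truncBound i) :
    π (simplexVertex i) - π y ∈ tightKer φ d (π y) := by
  rw [← map_sub]
  exact map_tightKer_le (Set.mapsTo_iff_image_subset.2 hπ.le) hy
    (Submodule.mem_map_of_mem (simplexVertex_sub_self_mem_tightKer hi))

theorem exists_map_simplexVertex_ne {φ : ι → Module.Dual ℝ E} {d : ι → ℝ} {π : (M → ℝ) →ₗ[ℝ] E}
    (hπ : π '' polyhedron (simplexRow M) truncBound = polyhedron φ d) {x c : E}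
    (hx : x ∈ polyhedron φ d) (hc : x ≠ c) :
    ∃ i, π (simplexVertex i) ≠ c ∧ π (simplexVertex i) - x ∈ tightKer φ d x := by
  obtain ⟨y, hy, rfl⟩ := hπ.ge hx
  obtain ⟨i, hi, hic⟩ : ∃ i, simplexRow M i y ≠ truncBound i ∧ π (simplexVertex i) ≠ c := by
    by_contra! h
    exact hc (map_eq_of_forall_map_simplexVertex_eq h)
  exact ⟨i, hic, map_simplexVertex_sub_mem_tightKer hπ hy hi⟩

theorem exists_map_simplexVertex_sub_mem [Finite ι] {φ : ι → Module.Dual ℝ E} {d : ι → ℝ}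
    {π : (M → ℝ) →ₗ[ℝ] E} (hπ : π '' polyhedron (simplexRow M) truncBound = polyhedron φ d)
    {x : E} (hx : x ∈ polyhedron φ d) (hker : tightKer φ d x ≠ ⊥) :
    ∃ i j, π (simplexVertex i) ≠ π (simplexVertex j) ∧
      π (simplexVertex i) - π (simplexVertex j) ∈ tightKer φ d x := by
  obtain ⟨g, hgx, hg⟩ := Submodule.exists_mem_ne_zero_of_ne_bot hker
  obtain ⟨ε, hε, hx'⟩ := exists_pos_add_smul_mem hx hgx
  have hεg : ε • g ∈ tightKer φ d x := Submodule.smul_mem _ _ hgx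
  have hne : x ≠ x + ε • g := by simpa using ⟨hε.ne', hg⟩
  obtain ⟨i, hix', hi⟩ := exists_map_simplexVertex_ne hπ hx hne
  obtain ⟨j, hji, hj⟩ := exists_map_simplexVertex_ne hπ hx' hix'.symm
  refine ⟨i, j, hji.symm, ?_⟩
  convert sub_mem (sub_mem hi (tightKer_anti (tightRows_subset_add hεg) hj)) hεg using 1
  abel

theorem isCircuit_inter_image_simplex [Finite ι] {φ : ι → Module.Dual ℝ (n → ℝ)} {d : ι → ℝ}
    {π : (M → ℝ) →ₗ[ℝ] (n → ℝ)} (hπ : π '' polyhedron (simplexRow M) truncBound = polyhedron φ d)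
    (hgen : ∀ i j k, π (simplexVertex i) ≠ π (simplexVertex j) →
      φ k (π (simplexVertex i)) = φ k (π (simplexVertex j)) → φ k (π (simplexVertex i)) = d k) :
    {g | IsCircuit φ g} ∩ π '' {y | IsCircuit (simplexRow M) y} =
      {g | IsEdgeDirection (polyhedron φ d) g} := by
  have hV (i : Option M) : π (simplexVertex i) ∈ polyhedron φ d :=
    hπ.le (Set.mem_image_of_mem π (simplexVertex_mem i))
  ext g
  simp only [Set.mem_inter_iff, Set.mem_image, Set.mem_ofPred_eq, isCircuit_simplexRow_iff,
    isEdgeDirection_iff ⟨_, hV none⟩]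
  constructor
  · rintro ⟨hg, _, ⟨i, j, -, t, ht, rfl⟩, rfl⟩
    rw [map_smul, map_sub] at hg ⊢
    have hij := hg.smul (inv_ne_zero ht)
    rw [inv_smul_smul₀ ht] at hij
    refine ⟨hg.1, midpoint ℝ (π (simplexVertex i)) (π (simplexVertex j)),
      convex_polyhedron.midpoint_mem (hV i) (hV j), ?_⟩
    have htight : tightRows φ d (midpoint ℝ (π (simplexVertex i)) (π (simplexVertex j))) =
        tightRows φ 0 (π (simplexVertex i) - π (simplexVertex j)) := by
      rw [tightRows_midpoint (hV i) (hV j)]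
      ext k
      change φ k _ = d k ∧ φ k _ = d k ↔ φ k _ = 0
      rw [map_sub, sub_eq_zero]
      refine ⟨fun h => h.1.trans h.2.symm, fun h => ?_⟩
      have hi := hgen i j k (sub_ne_zero.1 hij.1) h
      exact ⟨hi, h.symm.trans hi⟩
    rw [Submodule.span_singleton_smul_eq ht.isUnit, ← hij.2, tightKer, htight, tightKer]
  · rintro ⟨hg, x, hx, hker⟩
    obtain ⟨i, j, hij, hmem⟩ := exists_map_simplexVertex_sub_mem hπ hx
      fun h => hg (Submodule.span_singleton_eq_bot.1 (hker.symm.trans h))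
    obtain ⟨t, ht, rfl⟩ := exists_ne_zero_eq_smul_of_mem_span (sub_ne_zero.2 hij) (hker ▸ hmem)
    refine ⟨isCircuit_of_tightKer_eq hg hker, t • (simplexVertex i - simplexVertex j),
      ⟨i, j, fun h => hij (congrArg _ (congrArg _ h)), t, ht, rfl⟩, ?_⟩
    rw [map_smul, map_sub]

end Simplex

end Projections

section RayFamilies

variable {T R M E : Type*} [AddCommGroup E] [Module ℝ E] [Fintype M]

/-- The linear map sending the unit vector `i` to the ray `u (τ i)`. -/
abbrev rayMap (u : R → E) (τ : M → R) : (M → ℝ) →ₗ[ℝ] E :=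
  Fintype.linearCombination ℝ (u ∘ τ)

theorem rayMap_simplexVertex [DecidableEq M] (u : R → E) (τ : M → R) (i : Option M) :
    rayMap u τ (simplexVertex i) = (i.map τ).elim 0 u := by
  cases i <;> simp [simplexVertex, Fintype.linearCombination_apply_single]

variable [Fintype T] [Fintype R]

/-- The vectors `u r` span the extreme rays of the cone `{x : 0 ≤ L x}`, each ray once, and are
normalized to lie on the hyperplane `∑ t, L x t = 1`. -/
structure IsExtremeRayFamily (L : E →ₗ[ℝ] (T → ℝ)) (u : R → E) : Prop where
  nonneg : ∀ r t, 0 ≤ L (u r) t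
  sum_eq_one : ∀ r, ∑ t, L (u r) t = 1
  isCircuit : ∀ r, IsCircuit (coneRow L) (u r)
  injective : Function.Injective u
  exists_eq_sum : ∀ x, (∀ t, 0 ≤ L x t) → ∃ w : R → ℝ, (∀ r, 0 ≤ w r) ∧ x = ∑ r, w r • u r

namespace IsExtremeRayFamily

variable {L : E →ₗ[ℝ] (T → ℝ)} {u : R → E} {τ : M → R} {x : E}

theorem ray_mem_polyhedron (h : IsExtremeRayFamily L u) (r : R) :
    u r ∈ polyhedron (coneRow L) 0 :=
  mem_polyhedron_coneRow.2 (h.nonneg r)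

theorem sum_map_rayMap (h : IsExtremeRayFamily L u) (τ : M → R) (y : M → ℝ) :
    ∑ t, L (rayMap u τ y) t = ∑ i, y i := by
  simp only [Fintype.linearCombination_apply, map_sum, map_smul, Finset.sum_apply,
    Pi.smul_apply, smul_eq_mul, Function.comp_apply]
  rw [Finset.sum_comm]
  simp_rw [← Finset.mul_sum, h.sum_eq_one, mul_one]

theorem image_orthant (h : IsExtremeRayFamily L u) (hτ : Function.Surjective τ) :
    rayMap u τ '' polyhedron (orthantRow M) 0 = polyhedron (coneRow L) 0 := by
  apply subset_antisymm
  · rintro _ ⟨y, hy, rfl⟩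
    rw [mem_polyhedron_coneRow] at hy ⊢
    intro t
    simp only [Fintype.linearCombination_apply, map_sum, map_smul, Finset.sum_apply]
    exact Finset.sum_nonneg fun i _ => mul_nonneg (hy i) (h.nonneg (τ i) t)
  · intro x hx
    obtain ⟨w, hw, rfl⟩ := h.exists_eq_sum x (mem_polyhedron_coneRow.1 hx)
    classical
    have hσ := Function.rightInverse_surjInv hτ
    have hinj := hσ.injective
    refine ⟨Function.extend (Function.surjInv hτ) w 0, ?_, ?_⟩
    · refine mem_polyhedron_coneRow.2 fun i => ?_
      by_cases hi : ∃ r, Function.surjInv hτ r = i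
      · obtain ⟨r, rfl⟩ := hi
        simpa [hinj.extend_apply] using hw r
      · simp [Function.extend_apply' _ _ _ hi]
    · rw [Fintype.linearCombination_apply]
      refine (Fintype.sum_of_injective (Function.surjInv hτ) hinj _ _ (fun i hi => ?_)
        fun r => ?_).symm
      · rw [Function.extend_apply' _ _ _ hi, Pi.zero_apply, zero_smul]
      · rw [hinj.extend_apply, Function.comp_apply, hσ r]

theorem image_simplex (h : IsExtremeRayFamily L u) (hτ : Function.Surjective τ) :
    rayMap u τ '' polyhedron (simplexRow M) truncBound = polyhedron (truncRow L) truncBound := by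
  ext x
  simp only [Set.mem_image, mem_polyhedron_truncRow, ← mem_polyhedron_coneRow,
    ← h.image_orthant hτ]
  constructor
  · rintro ⟨y, ⟨hsum, hy⟩, rfl⟩
    exact ⟨(h.sum_map_rayMap τ y).trans_le hsum, y, hy, rfl⟩
  · rintro ⟨hsum, y, hy, rfl⟩
    exact ⟨y, ⟨(h.sum_map_rayMap τ y).ge.trans hsum, hy⟩, rfl⟩

theorem injective_elim (h : IsExtremeRayFamily L u) :
    Function.Injective fun o : Option R => o.elim 0 u := by
  have h0 (r : R) : u r ≠ 0 := (h.isCircuit r).1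
  rintro (_ | r) (_ | s) hrs
  · rfl
  · exact (h0 s hrs.symm).elim
  · exact (h0 r hrs).elim
  · exact congrArg some (h.injective hrs)

theorem tightKer_truncRow_elim (h : IsExtremeRayFamily L u) (hL : Function.Injective L)
    (o : Option R) : tightKer (truncRow L) truncBound (o.elim 0 u) = ⊥ := by
  rw [Submodule.eq_bot_iff]
  intro y hy
  rw [mem_tightKer, Option.forall] at hy
  simp only [truncRow_none, truncRow_some, truncBound_none, truncBound_some, neg_eq_zero] at hy
  cases o with
  | none => exact hL (funext fun t => by simpa using hy.2 t (by simp))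
  | some r =>
    obtain ⟨c, rfl⟩ : ∃ c : ℝ, c • u r = y := by
      rw [← Submodule.mem_span_singleton, ← (h.isCircuit r).2]
      exact mem_tightKer_coneRow.2 hy.2
    have hc := hy.1 (h.sum_eq_one r)
    rw [sum_map_smul, h.sum_eq_one, mul_one] at hc
    rw [hc, zero_smul]

theorem elim_mem_polyhedron_truncRow (h : IsExtremeRayFamily L u) (o : Option R) :
    o.elim 0 u ∈ polyhedron (truncRow L) truncBound := by
  rw [mem_polyhedron_truncRow]
  cases o with
  | none => simp
  | some r => exact ⟨(h.sum_eq_one r).le, h.nonneg r⟩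

theorem exists_eq_elim (h : IsExtremeRayFamily L u) (hx : x ∈ polyhedron (truncRow L) truncBound)
    (hker : tightKer (truncRow L) truncBound x = ⊥) : ∃ o : Option R, o.elim 0 u = x := by
  classical
  obtain ⟨y, hy, rfl⟩ := (h.image_simplex Function.surjective_id).ge hx
  obtain ⟨i, hi⟩ := exists_simplexRow_ne_truncBound y
  have hmem := map_simplexVertex_sub_mem_tightKer (h.image_simplex Function.surjective_id) hy hi
  rw [hker, Submodule.mem_bot, sub_eq_zero, rayMap_simplexVertex, Option.map_id] at hmem
  exact ⟨i, hmem⟩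

theorem minFace_ray_injective (h : IsExtremeRayFamily L u) :
    Function.Injective (minFace (coneRow L) 0 ∘ u) := by
  intro r s hrs
  have hmem : u s ∈ tightKer (coneRow L) 0 (u r) := by
    have hs : u s ∈ minFace (coneRow L) 0 (u r) :=
      (Set.ext_iff.1 hrs (u s)).2 (self_mem_minFace (h.ray_mem_polyhedron s))
    simpa using add_mem (sub_mem_tightKer hs) self_mem_tightKer_zero
  rw [(h.isCircuit r).2] at hmem
  obtain ⟨c, hc⟩ := Submodule.mem_span_singleton.1 hmem
  have hc1 : c = 1 := by
    have hsum := h.sum_eq_one s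
    rwa [← hc, sum_map_smul, h.sum_eq_one, mul_one] at hsum
  rw [hc1, one_smul] at hc
  exact h.injective hc

theorem exists_minFace_eq (h : IsExtremeRayFamily L u) (hx : x ∈ polyhedron (coneRow L) 0)
    (hx0 : x ≠ 0) {g : E} (hg : tightKer (coneRow L) 0 x = ℝ ∙ g) :
    ∃ r, minFace (coneRow L) 0 (u r) = minFace (coneRow L) 0 x := by
  classical
  obtain ⟨r, hr0, hr⟩ :=
    exists_single_mem_tightKer (h.image_orthant Function.surjective_id) hx hx0
  rw [Fintype.linearCombination_apply_single, one_smul, Function.comp_id] at hr0 hr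
  obtain ⟨c, hc, hgc⟩ := exists_ne_zero_eq_smul_of_mem_span hr0 (hg ▸ hr)
  obtain ⟨t, ht, hgt⟩ :=
    exists_ne_zero_eq_smul_of_mem_span hx0 (hg ▸ self_mem_tightKer_zero (g := x))
  exact ⟨r, by rw [← minFace_smul hc, ← hgc, hgt, minFace_smul ht]⟩

variable {g : E}

theorem eq_truncBound_of_map_eq (h : IsExtremeRayFamily L u)
    (hgen : ∀ r s t, r ≠ s → L (u r) t = L (u s) t → L (u r) t = 0) {a b : Option R}
    {k : Option T} (hab : a.elim 0 u ≠ b.elim 0 u)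
    (hk : truncRow L k (a.elim 0 u) = truncRow L k (b.elim 0 u)) :
    truncRow L k (a.elim 0 u) = truncBound k := by
  rcases a with _ | r <;> rcases b with _ | s
  · exact (hab rfl).elim
  · cases k <;> simp_all [h.sum_eq_one]
  · cases k <;> simp_all [h.sum_eq_one]
  · cases k with
    | none => simp [h.sum_eq_one]
    | some t =>
      have hrs : r ≠ s := fun hrs => hab (congrArg u hrs)
      exact neg_eq_zero.2 (hgen r s t hrs (neg_inj.1 hk))

theorem notMem_image_isCircuit (h : IsExtremeRayFamily L u) (τ : M → R) {t₁ t₂ : T}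
    (hneg : L g t₁ < 0) (hpos : 0 < L g t₂) (hsum : ∑ t, L g t ≠ 0) :
    g ∉ rayMap u τ '' {y | IsCircuit (simplexRow M) y} := by
  classical
  have hray (c : ℝ) (r : R) : g ≠ c • u r := by
    rintro rfl
    simp only [map_smul, Pi.smul_apply, smul_eq_mul] at hneg hpos
    have h₁ := h.nonneg r t₁
    have h₂ := h.nonneg r t₂
    rcases le_total 0 c with hc | hc <;> nlinarith
  rintro ⟨_, hy, rfl⟩
  obtain ⟨i, j, hij, c, -, rfl⟩ := isCircuit_simplexRow_iff.1 hy
  rw [map_smul, map_sub, rayMap_simplexVertex, rayMap_simplexVertex] at hsum hray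
  rcases i with _ | i <;> rcases j with _ | j
  · exact hij rfl
  · exact hray (-c) (τ j) (by simp)
  · exact hray c (τ i) (by simp)
  · exact hsum (by
      simp only [sum_map_smul, Option.map_some, Option.elim_some, map_sub, Pi.sub_apply,
        Finset.sum_sub_distrib, h.sum_eq_one, sub_self, mul_zero])

section Coordinates

variable {n : Type*} [Fintype n] {L : (n → ℝ) →ₗ[ℝ] (T → ℝ)} {u : R → n → ℝ}

theorem setOf_isVertex_eq_range (h : IsExtremeRayFamily L u) (hL : Function.Injective L) :
    {v | IsVertex (polyhedron (truncRow L) truncBound) v} =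
      Set.range fun o : Option R => o.elim 0 u := by
  ext v
  simp only [Set.mem_ofPred_eq, isVertex_iff]
  constructor
  · rintro ⟨hv, hker⟩
    exact h.exists_eq_elim hv hker
  · rintro ⟨o, rfl⟩
    exact ⟨h.elim_mem_polyhedron_truncRow o, h.tightKer_truncRow_elim hL o⟩

theorem ncard_isVertex (h : IsExtremeRayFamily L u) (hL : Function.Injective L) :
    {v | IsVertex (polyhedron (truncRow L) truncBound) v}.ncard = Nat.card (Option R) := by
  rw [h.setOf_isVertex_eq_range hL, Set.ncard_range_of_injective h.injective_elim]

theorem setOf_isEdge_eq_range (h : IsExtremeRayFamily L u)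
    (h0 : tightKer (coneRow L) 0 0 = ⊥) :
    {F | IsEdge (polyhedron (coneRow L) 0) F} = Set.range (minFace (coneRow L) 0 ∘ u) := by
  have hne : (polyhedron (coneRow L) 0).Nonempty := ⟨0, zero_mem_polyhedron_zero⟩
  ext F
  simp only [Set.mem_ofPred_eq, isEdge_iff hne]
  constructor
  · rintro ⟨x, hx, rfl, g, hg0, hg⟩
    refine h.exists_minFace_eq hx ?_ hg
    rintro rfl
    exact hg0 (Submodule.span_singleton_eq_bot.1 (hg.symm.trans h0))
  · rintro ⟨r, rfl⟩
    exact ⟨u r, h.ray_mem_polyhedron r, rfl, u r, h.isCircuit r⟩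

theorem ncard_isEdge (h : IsExtremeRayFamily L u) (h0 : tightKer (coneRow L) 0 0 = ⊥) :
    {F | IsEdge (polyhedron (coneRow L) 0) F}.ncard = Nat.card R := by
  rw [h.setOf_isEdge_eq_range h0, Set.ncard_range_of_injective h.minFace_ray_injective]

variable {τ : M → R}

theorem isCircuit_inter_image_simplex (h : IsExtremeRayFamily L u) (hτ : Function.Surjective τ)
    (hgen : ∀ r s t, r ≠ s → L (u r) t = L (u s) t → L (u r) t = 0) :
    {g | IsCircuit (truncRow L) g} ∩ rayMap u τ '' {y | IsCircuit (simplexRow M) y} =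
      {g | IsEdgeDirection (polyhedron (truncRow L) truncBound) g} := by
  classical
  refine _root_.isCircuit_inter_image_simplex (h.image_simplex hτ) fun i j k hij hk => ?_
  simp only [rayMap_simplexVertex] at hij hk ⊢
  exact h.eq_truncBound_of_map_eq hgen hij hk

end Coordinates

end IsExtremeRayFamily

end RayFamilies

section Quadrilateral

/-- The rows are the extreme rays of the cone `{z : 0 ≤ z, z 0 + 2 * z 2 = z 1 + 2 * z 3}` over a
quadrilateral, normalized to have coordinate sum one. The coefficients of the equation are chosen
so that no two rays agree in a nonzero coordinate. -/
def quadRay : Matrix (Fin 4) (Fin 4) ℝ :=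
  !![1/2, 1/2, 0, 0; 0, 2/3, 1/3, 0; 0, 0, 1/2, 1/2; 2/3, 0, 0, 1/3]

theorem quadRay_nonneg (i j : Fin 4) : 0 ≤ quadRay i j := by
  fin_cases i <;> fin_cases j <;> norm_num [quadRay]

theorem quadRay_add_eq (i : Fin 4) :
    quadRay i 0 + 2 * quadRay i 2 = quadRay i 1 + 2 * quadRay i 3 := by
  fin_cases i <;> simp [quadRay, div_eq_mul_inv]

theorem sum_quadRay (i : Fin 4) : ∑ j, quadRay i j = 1 := by
  fin_cases i <;> simp [quadRay, Fin.sum_univ_four] <;> norm_num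

theorem quadRay_eq_zero_of_eq {i j k : Fin 4} (hij : i ≠ j) (h : quadRay i k = quadRay j k) :
    quadRay i k = 0 := by
  revert hij h
  fin_cases i <;> fin_cases j <;> fin_cases k <;> norm_num [quadRay]

theorem eq_sum_smul_quadRay {z : Fin 4 → ℝ} (hz : z 0 + 2 * z 2 = z 1 + 2 * z 3) {i : Fin 4}
    (h : ∀ j, quadRay i j = 0 → z j = 0) : z = (∑ j, z j) • quadRay i := by
  ext j
  fin_cases i <;> fin_cases j <;>
    simp [quadRay, Fin.forall_fin_succ, Fin.sum_univ_four] at h ⊢ <;>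
    linarith

theorem exists_eq_sum_smul_quadRay {z : Fin 4 → ℝ} (hz : z 0 + 2 * z 2 = z 1 + 2 * z 3)
    (h : ∀ j, 0 ≤ z j) : ∃ w : Fin 4 → ℝ, (∀ i, 0 ≤ w i) ∧ z = ∑ i, w i • quadRay i := by
  obtain ⟨a, ha, ha₀, ha₁, ha₂⟩ : ∃ a, 0 ≤ a ∧ a ≤ z 0 ∧ a ≤ z 1 ∧ z 1 - a ≤ 2 * z 2 := by
    refine ⟨min (z 0) (z 1), le_min (h 0) (h 1), min_le_left _ _, min_le_right _ _, ?_⟩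
    rcases min_choice (z 0) (z 1) with hmin | hmin <;> rw [hmin] <;> linarith [h 2, h 3]
  refine ⟨![2 * a, 3 / 2 * (z 1 - a), 2 * z 2 - (z 1 - a), 3 / 2 * (z 0 - a)], ?_, ?_⟩
  · simp [Fin.forall_fin_succ, ha, ha₀, ha₁, ha₂]
  · ext j
    fin_cases j <;> simp [quadRay, Fin.sum_univ_four] <;> linarith

end Quadrilateral

section SquareCone

variable {κ : Type*}

/-- The linear form defining `squareHyperplane`; it vanishes on the rows of `quadRay`. -/
def squareForm (κ : Type*) : Module.Dual ℝ (Fin 4 ⊕ κ → ℝ) :=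
  .proj (.inl 0) + (2 : ℝ) • .proj (.inl 2) - (.proj (.inl 1) + (2 : ℝ) • .proj (.inl 3))

/-- A hyperplane whose intersection with the nonnegative orthant is the product of the cone over a
quadrilateral spanned by the rows of `quadRay` with the nonnegative orthant of `κ → ℝ`. -/
def squareHyperplane (κ : Type*) : Submodule ℝ (Fin 4 ⊕ κ → ℝ) :=
  LinearMap.ker (squareForm κ)

theorem mem_squareHyperplane {z : Fin 4 ⊕ κ → ℝ} : z ∈ squareHyperplane κ ↔
    z (.inl 0) + 2 * z (.inl 2) = z (.inl 1) + 2 * z (.inl 3) := by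
  simp [squareHyperplane, squareForm, sub_eq_zero]

theorem finrank_squareHyperplane [Fintype κ] :
    Module.finrank ℝ (squareHyperplane κ) = Fintype.card κ + 3 := by
  classical
  have hne : squareForm κ ≠ 0 := fun h => by
    simpa [squareForm] using LinearMap.congr_fun h (Pi.single (.inl 0) 1)
  have hker := Module.Dual.finrank_ker_add_one_of_ne_zero hne
  rw [Module.finrank_fintype_fun_eq_card, Fintype.card_sum, Fintype.card_fin] at hker
  rw [squareHyperplane]
  omega

theorem exists_mem_squareHyperplane_eq_zero_iff (s : Fin 4 ⊕ κ) :
    ∃ z ∈ squareHyperplane κ, (∀ t, 0 ≤ z t) ∧ ∀ t, z t = 0 ↔ t = s := by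
  classical
  rcases s with i | k
  · refine ⟨Sum.elim (!![0, 2, 2, 1; 2, 0, 1, 2; 3, 1, 0, 1; 1, 3, 1, 0] i) 1, ?_, ?_, ?_⟩
    · rw [mem_squareHyperplane]
      fin_cases i <;> simp <;> norm_num
    · rintro (j | _)
      · fin_cases i <;> fin_cases j <;> simp
      · simp
    · rintro (j | l)
      · fin_cases i <;> fin_cases j <;> simp
      · simp
  · refine ⟨Sum.elim 1 (1 - Pi.single k 1), by simp [mem_squareHyperplane], ?_, ?_⟩
    · rintro (_ | l)
      · simp
      · rcases eq_or_ne l k with rfl | hl <;> simp [*]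
    · rintro (j | l)
      · simp
      · rcases eq_or_ne l k with rfl | hl <;> simp [*]

theorem exists_injective_range_eq_squareHyperplane {n : Type*} [Fintype n] [Fintype κ]
    (hn : Fintype.card n = Fintype.card κ + 3) :
    ∃ L : (n → ℝ) →ₗ[ℝ] (Fin 4 ⊕ κ → ℝ), Function.Injective L ∧
      LinearMap.range L = squareHyperplane κ := by
  let e : (n → ℝ) ≃ₗ[ℝ] squareHyperplane κ :=
    LinearEquiv.ofFinrankEq _ _ (by rw [Module.finrank_fintype_fun_eq_card, hn,
      finrank_squareHyperplane])
  refine ⟨(squareHyperplane κ).subtype ∘ₗ e, ?_, ?_⟩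
  · exact Subtype.val_injective.comp e.injective
  · rw [LinearMap.range_comp, LinearEquiv.range, Submodule.map_top, Submodule.range_subtype]

variable {E : Type*} [AddCommGroup E] [Module ℝ E] {L : E →ₗ[ℝ] (Fin 4 ⊕ κ → ℝ)}

theorem isIrredundantSystem_of_range_eq (hL : Function.Injective L)
    (hrange : LinearMap.range L = squareHyperplane κ) : IsIrredundantSystem (coneRow L) 0 where
  exists_strict := by
    obtain ⟨x, hx⟩ : 1 ∈ LinearMap.range L := hrange ▸ mem_squareHyperplane.2 (by simp)
    exact ⟨x, by simp [hx]⟩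
  exists_tightRows_eq_singleton s := by
    obtain ⟨z, hz, hnonneg, hzero⟩ := exists_mem_squareHyperplane_eq_zero_iff s
    obtain ⟨x, rfl⟩ := hrange.ge hz
    exact ⟨x, mem_polyhedron_coneRow.2 hnonneg, by ext t; simpa [tightRows] using hzero t⟩
  eq_zero_of_forall_eq_zero x hx :=
    (map_eq_zero_iff L hL).1 (funext fun t => neg_eq_zero.1 (hx t))

theorem exists_isCircuit_coneRow (hL : Function.Injective L)
    (hrange : LinearMap.range L = squareHyperplane κ) :
    ∃ g, IsCircuit (coneRow L) g ∧ L g = Sum.elim ![2, 0, -1, 0] 0 := by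
  obtain ⟨g, hg⟩ : Sum.elim ![2, 0, -1, 0] 0 ∈ LinearMap.range L :=
    hrange ▸ mem_squareHyperplane.2 (by simp)
  refine ⟨g, isCircuit_of_tightKer_le ?_ fun y hy => Submodule.mem_span_singleton.2
      ⟨L y (.inl 0) / 2, hL ?_⟩, hg⟩
  · rintro rfl
    simpa using congrFun hg (.inl 0)
  · rw [mem_tightKer_coneRow, hg] at hy
    have hmem := mem_squareHyperplane.1 (hrange ▸ LinearMap.mem_range_self L y)
    have h₁ := hy (.inl 1) rfl
    have h₃ := hy (.inl 3) rfl
    rw [map_smul, hg]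
    ext (j | l)
    · fin_cases j <;> simp <;> linarith
    · simpa using (hy (.inr l) rfl).symm

variable [DecidableEq κ]

/-- The rows are the extreme rays of the nonnegative part of `squareHyperplane κ`, normalized to
have coordinate sum one. -/
def squareRay (κ : Type*) [DecidableEq κ] : Matrix (Fin 4 ⊕ κ) (Fin 4 ⊕ κ) ℝ :=
  fromBlocks quadRay 0 0 1

theorem squareRay_mem (t : Fin 4 ⊕ κ) : squareRay κ t ∈ squareHyperplane κ := by
  rw [mem_squareHyperplane]
  cases t with
  | inl i => exact quadRay_add_eq i
  | inr k => simp [squareRay]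

theorem squareRay_nonneg (t s : Fin 4 ⊕ κ) : 0 ≤ squareRay κ t s := by
  rcases t with i | k <;> rcases s with j | l
  · exact quadRay_nonneg i j
  · exact le_rfl
  · exact le_rfl
  · simp only [squareRay, fromBlocks_apply₂₂, one_apply]
    split_ifs <;> norm_num

theorem squareRay_eq_zero_of_eq {r s t : Fin 4 ⊕ κ} (hrs : r ≠ s)
    (h : squareRay κ r t = squareRay κ s t) : squareRay κ r t = 0 := by
  rcases t with a | b <;> rcases r with i | k <;> rcases s with j | l
  · exact quadRay_eq_zero_of_eq (fun hij => hrs (congrArg _ hij)) h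
  · exact h
  · rfl
  · rfl
  · rfl
  · rfl
  · exact h
  · rcases eq_or_ne k b with rfl | hk <;> simp_all [squareRay, one_apply]

variable [Fintype κ]

theorem sum_squareRay (t : Fin 4 ⊕ κ) : ∑ s, squareRay κ t s = 1 := by
  cases t with
  | inl i => simpa [squareRay] using sum_quadRay i
  | inr k => simp [squareRay, one_apply]

theorem eq_sum_smul_squareRay {z : Fin 4 ⊕ κ → ℝ} (hz : z ∈ squareHyperplane κ)
    {t : Fin 4 ⊕ κ} (h : ∀ s, squareRay κ t s = 0 → z s = 0) :
    z = (∑ s, z s) • squareRay κ t := by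
  rw [mem_squareHyperplane] at hz
  rcases t with i | k
  · have hr (l : κ) : z (.inr l) = 0 := h (.inr l) rfl
    have hl := eq_sum_smul_quadRay (z := z ∘ .inl) hz fun j => h (.inl j)
    ext (j | l)
    · simpa [hr, squareRay] using congrFun hl j
    · simp [hr, squareRay]
  · have hl (j : Fin 4) : z (.inl j) = 0 := h (.inl j) rfl
    have hr (l : κ) (hlk : l ≠ k) : z (.inr l) = 0 :=
      h (.inr l) (by simp [squareRay, one_apply, hlk.symm])
    ext (j | l)
    · simp [hl, squareRay]
    · rcases eq_or_ne l k with rfl | hlk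
      · simp [hl, squareRay, Fintype.sum_eq_single l hr]
      · simp [hr l hlk, squareRay, one_apply, hlk.symm]

theorem exists_eq_sum_smul_squareRay {z : Fin 4 ⊕ κ → ℝ} (hz : z ∈ squareHyperplane κ)
    (h : ∀ s, 0 ≤ z s) :
    ∃ w : Fin 4 ⊕ κ → ℝ, (∀ t, 0 ≤ w t) ∧ z = ∑ t, w t • squareRay κ t := by
  obtain ⟨w, hw, hzw⟩ := exists_eq_sum_smul_quadRay (z := z ∘ .inl) (mem_squareHyperplane.1 hz)
    fun j => h (.inl j)
  refine ⟨Sum.elim w (z ∘ .inr), by simpa [Sum.forall] using ⟨hw, fun k => h (.inr k)⟩, ?_⟩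
  ext (j | l)
  · simpa [squareRay] using congrFun hzw j
  · simp [squareRay, one_apply]

theorem isExtremeRayFamily_of_map_eq (hL : Function.Injective L)
    (hrange : LinearMap.range L = squareHyperplane κ) {u : Fin 4 ⊕ κ → E}
    (hu : ∀ t, L (u t) = squareRay κ t) : IsExtremeRayFamily L u where
  nonneg r t := by rw [hu]; exact squareRay_nonneg r t
  sum_eq_one r := by rw [hu]; exact sum_squareRay r
  isCircuit r := by
    refine isCircuit_of_tightKer_le ?_ fun y hy => Submodule.mem_span_singleton.2
      ⟨∑ t, L y t, hL ?_⟩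
    · rintro h0
      simpa [← hu, h0] using sum_squareRay r
    · rw [mem_tightKer_coneRow, hu] at hy
      rw [map_smul, hu]
      exact (eq_sum_smul_squareRay (hrange ▸ LinearMap.mem_range_self L y) hy).symm
  injective r s hrs := by
    by_contra hne
    have hzero (t) : squareRay κ r t = 0 :=
      squareRay_eq_zero_of_eq hne (by rw [← hu, ← hu, hrs])
    simpa [hzero] using sum_squareRay r
  exists_eq_sum x hx := by
    obtain ⟨w, hw, hxw⟩ :=
      exists_eq_sum_smul_squareRay (hrange ▸ LinearMap.mem_range_self L x) hx
    refine ⟨w, hw, hL ?_⟩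
    simpa only [map_sum, map_smul, hu] using hxw

end SquareCone

theorem exists_squareCone {n κ : Type*} [Fintype n] [Fintype κ]
    (hn : Fintype.card n = Fintype.card κ + 3) :
    ∃ (L : (n → ℝ) →ₗ[ℝ] (Fin 4 ⊕ κ → ℝ)) (u : Fin 4 ⊕ κ → n → ℝ) (g : n → ℝ),
      Function.Injective L ∧ IsIrredundantSystem (coneRow L) 0 ∧ IsExtremeRayFamily L u ∧
        (∀ r s t, r ≠ s → L (u r) t = L (u s) t → L (u r) t = 0) ∧
        IsCircuit (coneRow L) g ∧ L g = Sum.elim ![2, 0, -1, 0] 0 := by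
  classical
  obtain ⟨L, hL, hrange⟩ := exists_injective_range_eq_squareHyperplane hn
  obtain ⟨g, hg, hLg⟩ := exists_isCircuit_coneRow hL hrange
  choose u hu using fun t => hrange.ge (squareRay_mem (κ := κ) t)
  refine ⟨L, u, g, hL, isIrredundantSystem_of_range_eq hL hrange,
    isExtremeRayFamily_of_map_eq hL hrange hu, fun r s t hrs => ?_, hg, hLg⟩
  rw [hu, hu]
  exact squareRay_eq_zero_of_eq hrs

/-- For all `m > n ≥ 3` there exist full-dimensional pointed polyhedra
`P ⊂ ℝⁿ`, `Q ⊂ ℝᵐ` (with irredundant descriptions) and a linear `π` with `π(Q) = P` such that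
`C(P) ⊄ π(C(Q))` and `C(P) ∩ π(C(Q))` is exactly the set of edge directions of `P`; this is
achieved once with `Q` simple and `P` a polytope with exactly `n+2` facets and `n+2` vertices,
and once with `Q` simple and `P` a pointed cone with exactly `n+1` facets and `n+1` edges. -/
theorem stmt_8 (n m : ℕ) (hn : 3 ≤ n) (hm : n < m) :
    (∃ (pP qP pQ qQ : ℕ)
      (AP : Matrix (Fin pP) (Fin n) ℝ) (bP : Fin pP → ℝ)
      (BP : Matrix (Fin qP) (Fin n) ℝ) (dP : Fin qP → ℝ)
      (AQ : Matrix (Fin pQ) (Fin m) ℝ) (bQ : Fin pQ → ℝ)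
      (BQ : Matrix (Fin qQ) (Fin m) ℝ) (dQ : Fin qQ → ℝ)
      (P : Set (Fin n → ℝ)) (Q : Set (Fin m → ℝ))
      (π : (Fin m → ℝ) →ₗ[ℝ] (Fin n → ℝ)),
      Irredundant AP bP BP dP P ∧ Irredundant AQ bQ BQ dQ Q ∧
      PointedSet P ∧ PointedSet Q ∧ spanDim P = n ∧ spanDim Q = m ∧
      (fun x => π x) '' Q = P ∧
      ¬ (circuits AP BP ⊆ (fun x => π x) '' circuits AQ BQ) ∧
      circuits AP BP ∩ (fun x => π x) '' circuits AQ BQ = {g | IsEdgeDirection P g} ∧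
      -- Q is simple: every vertex of Q lies in exactly m facets
      (∀ v, IsVertex Q v → {F | IsFacet Q F ∧ v ∈ F}.ncard = m) ∧
      -- P is a polytope with exactly n+2 facets and exactly n+2 vertices
      Bornology.IsBounded P ∧
      {F | IsFacet P F}.ncard = n + 2 ∧
      {v | IsVertex P v}.ncard = n + 2) ∧
    (∃ (pP qP pQ qQ : ℕ)
      (AP : Matrix (Fin pP) (Fin n) ℝ) (bP : Fin pP → ℝ)
      (BP : Matrix (Fin qP) (Fin n) ℝ) (dP : Fin qP → ℝ)
      (AQ : Matrix (Fin pQ) (Fin m) ℝ) (bQ : Fin pQ → ℝ)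
      (BQ : Matrix (Fin qQ) (Fin m) ℝ) (dQ : Fin qQ → ℝ)
      (P : Set (Fin n → ℝ)) (Q : Set (Fin m → ℝ))
      (π : (Fin m → ℝ) →ₗ[ℝ] (Fin n → ℝ)),
      Irredundant AP bP BP dP P ∧ Irredundant AQ bQ BQ dQ Q ∧
      PointedSet P ∧ PointedSet Q ∧ spanDim P = n ∧ spanDim Q = m ∧
      (fun x => π x) '' Q = P ∧
      ¬ (circuits AP BP ⊆ (fun x => π x) '' circuits AQ BQ) ∧
      circuits AP BP ∩ (fun x => π x) '' circuits AQ BQ = {g | IsEdgeDirection P g} ∧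
      (∀ v, IsVertex Q v → {F | IsFacet Q F ∧ v ∈ F}.ncard = m) ∧
      -- P is a pointed polyhedral cone with exactly n+1 facets and n+1 edges
      (∀ x ∈ P, ∀ t : ℝ, 0 ≤ t → t • x ∈ P) ∧
      {F | IsFacet P F}.ncard = n + 1 ∧
      {F | IsEdge P F}.ncard = n + 1) := by
  have hm₀ : Nonempty (Fin m) := ⟨⟨0, by omega⟩⟩
  have hcard : Fintype.card (Fin 4 ⊕ Fin (n - 3)) = n + 1 := by
    simp only [Fintype.card_sum, Fintype.card_fin]; omega
  obtain ⟨L, u, g, hL, hcone, hrays, hgen, hg, hLg⟩ :=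
    exists_squareCone (n := Fin n) (κ := Fin (n - 3)) (by simp only [Fintype.card_fin]; omega)
  obtain ⟨e⟩ := Function.Embedding.nonempty_of_card_le (α := Fin 4 ⊕ Fin (n - 3)) (β := Fin m)
    (by rw [hcard, Fintype.card_fin]; exact hm)
  have hτ := Function.invFun_surjective e.injective
  have hmiss := hrays.notMem_image_isCircuit (g := g) (Function.invFun e)
    (t₁ := .inl 2) (t₂ := .inl 0) (by simp [hLg]) (by simp [hLg])
    (by simp [hLg, Fin.sum_univ_four]; norm_num)
  have horthant := isIrredundantSystem_orthantRow (M := Fin m)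
  constructor
  · refine hcone.truncRow.exists_irredundant_extension horthant.truncRow (hrays.image_simplex hτ)
      (fun hsub => hmiss (hsub hg.truncRow)) (hrays.isCircuit_inter_image_simplex hτ hgen)
      ⟨fun v hv => (ncard_isFacet_mem_simplex hv).trans (Fintype.card_fin m),
        isBounded_polyhedron_truncRow hL, ?_, ?_⟩
    · simp [hcone.truncRow.ncard_isFacet, hcard]
    · simp [hrays.ncard_isVertex hL, hcard]
  · have h₀ := hcone.tightKer_zero_eq_bot
    refine hcone.exists_irredundant_extension horthant (hrays.image_orthant hτ)
      (fun hsub => hmiss (Set.image_mono (fun _ => IsCircuit.truncRow) (hsub hg)))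
      (isCircuit_inter_image_orthant h₀ (hrays.image_orthant hτ))
      ⟨fun v hv => (ncard_isFacet_mem_orthant hv).trans (Fintype.card_fin m),
        fun x hx t ht => smul_mem_polyhedron_zero hx ht, ?_, ?_⟩
    · simp [hcone.ncard_isFacet, hcard]
    · simp [hrays.ncard_isEdge h₀, hcard]
end
end

section
/- For every n ≥ 5 there exist k ∈ ℕ, κ = (κ₁,…,κ_k) ∈ ℕᵏ with κ₁ + … + κ_k = n, and points x⁽¹⁾,…,x⁽ⁿ⁾ ∈ ℝ^{n−2} such that, for some irredundant description of the fixed-shape partition polytope P(X,k,κ), one has C(P(X,k,κ)) ⊄ π_X(C(T(n,k,κ))), where C(T(n,k,κ)) denotes the circuits of the transportation description of T(n,k,κ). -/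
open Matrix

noncomputable section

/-- Equality matrix of the transportation description of `T(n,k,κ)`:
row `i : Fin k` encodes `Σⱼ y i j = κ i`, row `j : Fin n` encodes `Σᵢ y i j = 1`. -/
def transA (n k : ℕ) : Matrix (Fin k ⊕ Fin n) (Fin k × Fin n) ℝ :=
  Matrix.of (Sum.elim
    (fun i yc => if yc.1 = i then 1 else 0)
    (fun j yc => if yc.2 = j then 1 else 0))

/-- Right-hand side of the equality part of the transportation description. -/
def transb (n k : ℕ) (κ : Fin k → ℕ) : (Fin k ⊕ Fin n) → ℝ :=
  Sum.elim (fun i => (κ i : ℝ)) (fun _ => 1)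

/-- The transportation polytope `T(n,k,κ)`, with inequality part `-y ≤ 0`. -/
def transportationPolytope (n k : ℕ) (κ : Fin k → ℕ) : Set (Fin k × Fin n → ℝ) :=
  polySet (transA n k) (transb n k κ) (-1 : Matrix (Fin k × Fin n) (Fin k × Fin n) ℝ) 0

/-- The circuits of the transportation description of `T(n,k,κ)`. -/
def transportationCircuits (n k : ℕ) : Set (Fin k × Fin n → ℝ) :=
  circuits (transA n k) (-1 : Matrix (Fin k × Fin n) (Fin k × Fin n) ℝ)

/-- The projection `π_X : ℝ^{k×n} → (ℝ^d)^k`, `y ↦ (c⁽¹⁾,…,c⁽ᵏ⁾)` with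
`c⁽ⁱ⁾ = Σⱼ y i j • x⁽ʲ⁾`, written as a matrix. -/
def projXMat {n d : ℕ} (k : ℕ) (X : Fin n → Fin d → ℝ) :
    Matrix (Fin k × Fin d) (Fin k × Fin n) ℝ :=
  Matrix.of fun c yc => if yc.1 = c.1 then X yc.2 c.2 else 0

/-- The fixed-shape partition polytope `P(X,k,κ) = π_X(T(n,k,κ))`. -/
def partitionPolytope {n d : ℕ} (k : ℕ) (κ : Fin k → ℕ) (X : Fin n → Fin d → ℝ) :
    Set (Fin k × Fin d → ℝ) :=
  (fun y => (projXMat k X).mulVec y) '' transportationPolytope n k κ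

/-!
With two clusters of sizes `1` and `n - 1` the transportation polytope is a simplex. Hence
`P(X, κ)` is an affine copy of the convex hull of `X`, and all circuits of the transportation
description project to multiples of differences of two points of `X`. In a pyramid over a trapezoid
the planes of the two lateral facets through the nonparallel legs meet in the line joining the apex
to the intersection point of the extended legs. The direction of this line is a circuit, but it is
not a multiple of any difference of vertices. Repeating vertices and coordinates realizes the same
pyramid with any `n ≥ 5` points in any dimension `≥ 3`.
-/

section Circuits

variable {p q m : Type*} [Fintype m] {A : Matrix p m ℝ} {B : Matrix q m ℝ} {g y : m → ℝ}

lemma mem_circuits_of_forall_exists_smul (hA : A *ᵥ g = 0) (hg : g ≠ 0)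
    (h : ∀ y, A *ᵥ y = 0 → (∀ i, (B *ᵥ g) i = 0 → (B *ᵥ y) i = 0) → ∃ t : ℝ, y = t • g) :
    g ∈ circuits A B := by
  refine ⟨hA, hg, fun y hy hy₀ hsupp => ?_⟩
  obtain ⟨t, rfl⟩ := h y hy fun i => not_imp_not.1 (@hsupp i)
  intro i hi
  simpa [mulVec_smul, left_ne_zero_of_smul hy₀] using hi

-- Subtracting the multiple of `g` that cancels coordinate `i` leaves a kernel element whose
-- support is strictly smaller than that of `g`, hence zero.
lemma exists_eq_smul_of_mem_circuits (hg : g ∈ circuits A B) {i : q} (hi : (B *ᵥ g) i ≠ 0)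
    (hy : A *ᵥ y = 0) (hsupp : ∀ j, (B *ᵥ g) j = 0 → (B *ᵥ y) j = 0) : ∃ t : ℝ, y = t • g := by
  obtain ⟨hAg, -, hmin⟩ := hg
  refine ⟨(B *ᵥ y) i / (B *ᵥ g) i, ?_⟩
  set r := y - ((B *ᵥ y) i / (B *ᵥ g) i) • g with hr
  have hBr (j : q) : (B *ᵥ r) j = (B *ᵥ y) j - (B *ᵥ y) i / (B *ᵥ g) i * (B *ᵥ g) j := by
    simp [hr, mulVec_sub, mulVec_smul]
  have hri : (B *ᵥ r) i = 0 := by rw [hBr, div_mul_cancel₀ _ hi, sub_self]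
  by_contra hne
  refine hmin r (by simp [hr, mulVec_sub, mulVec_smul, hy, hAg]) (sub_ne_zero.2 hne)
    (fun j => mt fun hj => ?_) hi hri
  rw [hBr, hj, hsupp j hj, mul_zero, sub_zero]

end Circuits

section StrictWitnesses

lemma vectorSpan_eq_of_forall_exists_smul {K E : Type*} [Field K] [AddCommGroup E] [Module K E]
    {S : Set E} {W : Submodule K E} {z : E} (hz : z ∈ S) (hSW : ∀ x ∈ S, x - z ∈ W)
    (hWS : ∀ v ∈ W, ∃ ε : K, ε ≠ 0 ∧ z + ε • v ∈ S) : vectorSpan K S = W := by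
  refine le_antisymm ?_ fun v hv => ?_
  · rw [vectorSpan_eq_span_vsub_set_right K hz, Submodule.span_le]
    rintro _ ⟨x, hx, rfl⟩
    exact hSW x hx
  · obtain ⟨ε, hε, hzv⟩ := hWS v hv
    have hmem : ε⁻¹ • (z + ε • v -ᵥ z) ∈ vectorSpan K S :=
      Submodule.smul_mem _ _ (vsub_mem_vectorSpan K hzv hz)
    rwa [vsub_eq_sub, add_sub_cancel_left, inv_smul_smul₀ hε] at hmem

lemma finrank_inf_ker_add_one {K V : Type*} [Field K] [AddCommGroup V] [Module K V]
    {W : Submodule K V} [FiniteDimensional K W] {f : Module.Dual K V} {v : V} (hv : v ∈ W)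
    (hfv : f v ≠ 0) :
    Module.finrank K (W ⊓ LinearMap.ker f : Submodule K V) + 1 = Module.finrank K W := by
  have hf : f.domRestrict W ≠ 0 := fun h => hfv (LinearMap.congr_fun h ⟨v, hv⟩)
  rw [← Submodule.map_comap_subtype, Submodule.finrank_map_subtype_eq, ← LinearMap.ker_domRestrict,
    Module.Dual.finrank_ker_add_one_of_ne_zero hf]

variable {p q m : Type*} [Fintype m] {A : Matrix p m ℝ} {b : p → ℝ} {B : Matrix q m ℝ} {d : q → ℝ}

lemma exists_pos_add_smul_mem_polySet [Finite q] {z v : m → ℝ} (hz : A *ᵥ z = b)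
    (hv : A *ᵥ v = 0)
    (hB : ∀ j, (B *ᵥ z) j < d j ∨ (B *ᵥ z) j = d j ∧ (B *ᵥ v) j = 0) :
    ∃ ε : ℝ, 0 < ε ∧ z + ε • v ∈ polySet A b B d := by
  have hev : ∀ᶠ ε : ℝ in nhdsWithin 0 (Set.Ioi 0),
      ∀ j, (B *ᵥ z) j + ε * (B *ᵥ v) j ≤ d j := by
    refine Filter.eventually_all.2 fun j => ?_
    rcases hB j with hlt | ⟨heq, hzero⟩
    · have hcont : Continuous fun ε : ℝ => (B *ᵥ z) j + ε * (B *ᵥ v) j := by fun_prop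
      filter_upwards [(hcont.tendsto 0).mono_left nhdsWithin_le_nhds (Iio_mem_nhds (by simpa))]
        with ε hε using le_of_lt hε
    · simp [heq, hzero]
  obtain ⟨ε, hε, hpos⟩ := (hev.and self_mem_nhdsWithin).exists
  refine ⟨ε, hpos, ?_, fun j => ?_⟩
  · rw [mulVec_add, mulVec_smul, hz, hv, smul_zero, add_zero]
  · simpa [mulVec_add, mulVec_smul] using hε j

/-- A certificate that the description `Ax = b, Bx ≤ d` is irredundant: some solution satisfies
all inequalities strictly, and each inequality is the only tight one at some solution. -/
structure HasStrictWitnesses (A : Matrix p m ℝ) (b : p → ℝ) (B : Matrix q m ℝ) (d : q → ℝ) :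
    Prop where
  exists_lt : ∃ z, A *ᵥ z = b ∧ ∀ j, (B *ᵥ z) j < d j
  exists_only_tight : ∀ i, ∃ z, A *ᵥ z = b ∧ (B *ᵥ z) i = d i ∧ ∀ j ≠ i, (B *ᵥ z) j < d j

lemma vectorSpan_polySet_of_lt [Finite q] {z : m → ℝ} (hz : A *ᵥ z = b)
    (hlt : ∀ j, (B *ᵥ z) j < d j) :
    vectorSpan ℝ (polySet A b B d) = LinearMap.ker A.mulVecLin := by
  refine vectorSpan_eq_of_forall_exists_smul ⟨hz, fun j => (hlt j).le⟩ (fun x hx => ?_)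
    fun v hv => ?_
  · simp [mulVec_sub, hx.1, hz]
  · obtain ⟨ε, hε, hmem⟩ := exists_pos_add_smul_mem_polySet hz hv fun j => .inl (hlt j)
    exact ⟨ε, hε.ne', hmem⟩

lemma vectorSpan_tight_of_lt [Finite q] {z : m → ℝ} {i : q} (hz : z ∈ polySet A b B d)
    (hi : (B *ᵥ z) i = d i) (hlt : ∀ j ≠ i, (B *ᵥ z) j < d j) :
    vectorSpan ℝ {x ∈ polySet A b B d | (B *ᵥ x) i = d i} =
      LinearMap.ker A.mulVecLin ⊓ LinearMap.ker (LinearMap.proj i ∘ₗ B.mulVecLin) := by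
  refine vectorSpan_eq_of_forall_exists_smul ⟨hz, hi⟩ (fun x hx => ?_) fun v hv => ?_
  · simp [mulVec_sub, hx.1.1, hx.2, hz.1, hi]
  · have hvi : (B *ᵥ v) i = 0 := hv.2
    have htight : ∀ j, (B *ᵥ z) j < d j ∨ (B *ᵥ z) j = d j ∧ (B *ᵥ v) j = 0 := fun j => by
      rcases eq_or_ne j i with rfl | hj
      · exact .inr ⟨hi, hvi⟩
      · exact .inl (hlt j hj)
    obtain ⟨ε, hε, hmem⟩ := exists_pos_add_smul_mem_polySet hz.1 hv.1 htight
    exact ⟨ε, hε.ne', hmem, by simp [mulVec_add, mulVec_smul, hi, hvi]⟩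

lemma affineSpan_polySet_of_lt [Finite q] {z : m → ℝ} (hz : A *ᵥ z = b)
    (hlt : ∀ j, (B *ᵥ z) j < d j) :
    (affineSpan ℝ (polySet A b B d) : Set (m → ℝ)) = {x | A *ᵥ x = b} := by
  have hmem : z ∈ affineSpan ℝ (polySet A b B d) :=
    mem_affineSpan ℝ ⟨hz, fun j => (hlt j).le⟩
  ext x
  rw [SetLike.mem_coe, ← AffineSubspace.vsub_right_mem_direction_iff_mem hmem,
    direction_affineSpan, vectorSpan_polySet_of_lt hz hlt]
  simp [mulVec_sub, hz, sub_eq_zero]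

theorem HasStrictWitnesses.irredundant [Finite q] (h : HasStrictWitnesses A b B d) :
    Irredundant A b B d (polySet A b B d) := by
  obtain ⟨z₀, hz₀, hlt₀⟩ := h.exists_lt
  refine ⟨rfl, (affineSpan_polySet_of_lt hz₀ hlt₀).symm, fun i => ?_⟩
  obtain ⟨z, hz, hi, hlt⟩ := h.exists_only_tight i
  have hmem : z ∈ polySet A b B d := ⟨hz, fun j => by
    rcases eq_or_ne j i with rfl | hj
    · exact hi.le
    · exact (hlt j hj).le⟩
  refine ⟨.inr ⟨B i, d i, fun y hy => hy.2 i, ⟨z, hmem, hi⟩, rfl⟩, ?_⟩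
  rw [spanDim, spanDim, direction_affineSpan, direction_affineSpan,
    vectorSpan_tight_of_lt hmem hi hlt, vectorSpan_polySet_of_lt hz₀ hlt₀]
  refine finrank_inf_ker_add_one (v := z - z₀) ?_ ?_
  · simp [mulVec_sub, hz, hz₀]
  · simpa [mulVec_sub, hi, sub_eq_zero] using (hlt₀ i).ne'

end StrictWitnesses

section AffineImage

variable {p p' q m ι : Type*} [Fintype m] [Fintype ι]

lemma submatrix_equiv_mulVec_eq_iff (e : p' ≃ p) {A : Matrix p m ℝ} {b : p → ℝ} {x : m → ℝ} :
    A.submatrix e id *ᵥ x = b ∘ e ↔ A *ᵥ x = b :=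
  e.surjective.injective_comp_right.eq_iff (a := A *ᵥ x)

lemma Irredundant.submatrix_equiv (e : p' ≃ p) {A : Matrix p m ℝ} {b : p → ℝ} {B : Matrix q m ℝ}
    {d : q → ℝ} {P : Set (m → ℝ)} (h : Irredundant A b B d P) :
    Irredundant (A.submatrix e id) (b ∘ e) B d P := by
  simpa only [Irredundant, polySet, submatrix_equiv_mulVec_eq_iff] using h

lemma circuits_submatrix_equiv (e : p' ≃ p) (A : Matrix p m ℝ) (B : Matrix q m ℝ) :
    circuits (A.submatrix e id) B = circuits A B := by
  have hker (x : m → ℝ) : A.submatrix e id *ᵥ x = 0 ↔ A *ᵥ x = 0 :=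
    submatrix_equiv_mulVec_eq_iff e (b := 0)
  simp only [circuits, hker]

lemma exists_description_image_of_injective {f : (m → ℝ) →ₗ[ℝ] (ι → ℝ)} (hf : Function.Injective f)
    (A : Matrix p m ℝ) (B : Matrix q m ℝ) :
    ∃ (A' : Matrix (ι ⊕ p) ι ℝ) (B' : Matrix q ι ℝ),
      (∀ (b : p → ℝ) x, A' *ᵥ x = Sum.elim (0 : ι → ℝ) b ↔ ∃ w, A *ᵥ w = b ∧ f w = x) ∧
      ∀ w, B' *ᵥ f w = B *ᵥ w := by
  classical
  obtain ⟨g, hg⟩ := f.exists_leftInverse_of_injective (LinearMap.ker_eq_bot.2 hf)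
  have hgf (w : m → ℝ) : g (f w) = w := LinearMap.congr_fun hg w
  refine ⟨.fromRows (1 - LinearMap.toMatrix' (f ∘ₗ g)) (A * LinearMap.toMatrix' g),
    B * LinearMap.toMatrix' g, fun b x => ?_, fun w => ?_⟩
  · rw [fromRows_mulVec, Sum.elim_eq_iff, sub_mulVec, one_mulVec, ← mulVec_mulVec,
      LinearMap.toMatrix'_mulVec, LinearMap.toMatrix'_mulVec, sub_eq_zero]
    constructor
    · rintro ⟨hx, hb⟩
      exact ⟨g x, hb, hx.symm⟩
    · rintro ⟨w, hw, rfl⟩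
      simp [hgf, hw]
  · rw [← mulVec_mulVec, LinearMap.toMatrix'_mulVec, hgf]

lemma map_mem_circuits {f : (m → ℝ) →ₗ[ℝ] (ι → ℝ)} (hf : Function.Injective f)
    {A : Matrix p m ℝ} {B : Matrix q m ℝ} {A' : Matrix p' ι ℝ} {B' : Matrix q ι ℝ}
    (hA : ∀ x, A' *ᵥ x = 0 ↔ ∃ w, A *ᵥ w = 0 ∧ f w = x) (hB : ∀ w, B' *ᵥ f w = B *ᵥ w)
    {g : m → ℝ} (hg : g ∈ circuits A B) : f g ∈ circuits A' B' := by
  obtain ⟨hAg, hg₀, hmin⟩ := hg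
  refine ⟨(hA _).2 ⟨g, hAg, rfl⟩, (map_ne_zero_iff f hf).2 hg₀, fun y hy hy₀ => ?_⟩
  obtain ⟨w, hw, rfl⟩ := (hA y).1 hy
  simpa only [hB] using hmin w hw ((map_ne_zero_iff f hf).1 hy₀)

theorem HasStrictWitnesses.exists_irredundant_image [Finite q] {A : Matrix p m ℝ} {b : p → ℝ}
    {B : Matrix q m ℝ} {d : q → ℝ} (h : HasStrictWitnesses A b B d)
    {φ : (m → ℝ) →ᵃ[ℝ] (ι → ℝ)} (hφ : Function.Injective φ) :
    ∃ (A' : Matrix (ι ⊕ p) ι ℝ) (b' : ι ⊕ p → ℝ) (B' : Matrix q ι ℝ) (d' : q → ℝ),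
      Irredundant A' b' B' d' (φ '' polySet A b B d) ∧
      φ.linear '' circuits A B ⊆ circuits A' B' := by
  have hlin : Function.Injective φ.linear := φ.linear_injective_iff.2 hφ
  obtain ⟨A', B', hA, hB⟩ := exists_description_image_of_injective hlin A B
  obtain ⟨c, hφ_apply⟩ : ∃ c, ∀ w, φ w = φ.linear w + c := ⟨φ 0, congrFun φ.decomp⟩
  set b' := A' *ᵥ c + Sum.elim (0 : ι → ℝ) b with hb'
  set d' := B' *ᵥ c + d with hd'
  have hA' (x : ι → ℝ) : A' *ᵥ x = b' ↔ ∃ w, A *ᵥ w = b ∧ φ w = x := by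
    rw [hb', ← sub_eq_iff_eq_add', ← mulVec_sub, hA]
    simp only [hφ_apply, eq_sub_iff_add_eq]
  have hB' (w : m → ℝ) (j : q) : (B' *ᵥ φ w) j = (B' *ᵥ c) j + (B *ᵥ w) j := by
    rw [hφ_apply, mulVec_add, hB, Pi.add_apply, add_comm]
  have hP : φ '' polySet A b B d = polySet A' b' B' d' := by
    ext x
    simp only [polySet, Set.mem_image, Set.mem_ofPred_eq, hA']
    constructor
    · rintro ⟨w, ⟨hw, hwB⟩, rfl⟩
      exact ⟨⟨w, hw, rfl⟩, fun j => by simpa [hd', hB'] using hwB j⟩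
    · rintro ⟨⟨w, hw, rfl⟩, hwB⟩
      exact ⟨w, ⟨hw, fun j => by simpa [hd', hB'] using hwB j⟩, rfl⟩
  have hwit : HasStrictWitnesses A' b' B' d' := by
    constructor
    · obtain ⟨z, hz, hlt⟩ := h.exists_lt
      exact ⟨φ z, (hA' _).2 ⟨z, hz, rfl⟩, by simpa [hd', hB'] using hlt⟩
    · intro i
      obtain ⟨z, hz, hi, hlt⟩ := h.exists_only_tight i
      exact ⟨φ z, (hA' _).2 ⟨z, hz, rfl⟩, by simpa [hd', hB'] using hi,
        by simpa [hd', hB'] using hlt⟩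
  refine ⟨A', b', B', d', hP ▸ hwit.irredundant, ?_⟩
  rintro _ ⟨g, hg, rfl⟩
  refine map_mem_circuits hlin (fun x => ?_) hB hg
  rw [← hA, Sum.elim_zero_zero]

end AffineImage

section TwoClusters

variable {J : Type*}

/-- The linear map `x ↦ (x, -x)`, in the coordinates used for two-cluster polytopes. -/
def antidiagonal : (J → ℝ) →ₗ[ℝ] (Fin 2 × J → ℝ) where
  toFun x c := ![x, -x] c.1 c.2
  map_add' _ _ := by
    ext ⟨i, j⟩
    fin_cases i <;> simp [add_comm]
  map_smul' _ _ := by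
    ext ⟨i, j⟩
    fin_cases i <;> simp

/-- The affine map `x ↦ (x, s - x)`: the first of two clusters determines the second one once
their total `s` is fixed. -/
def complementPair (s : J → ℝ) : (J → ℝ) →ᵃ[ℝ] (Fin 2 × J → ℝ) :=
  antidiagonal.toAffineMap + AffineMap.const ℝ _ fun c => ![0, s] c.1 c.2

@[simp]
lemma antidiagonal_zero_left (x : J → ℝ) (j : J) : antidiagonal x (0, j) = x j := rfl

@[simp]
lemma antidiagonal_one_left (x : J → ℝ) (j : J) : antidiagonal x (1, j) = -x j := rfl

@[simp]
lemma complementPair_zero_left (s x : J → ℝ) (j : J) : complementPair s x (0, j) = x j := by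
  simp [complementPair]

@[simp]
lemma complementPair_one_left (s x : J → ℝ) (j : J) : complementPair s x (1, j) = s j - x j := by
  simp [complementPair, sub_eq_neg_add]

@[simp]
lemma linear_complementPair (s : J → ℝ) : (complementPair s).linear = antidiagonal := by
  simp [complementPair]

lemma antidiagonal_injective : Function.Injective (antidiagonal (J := J)) := fun _ _ h =>
  funext fun j => congrFun h (0, j)

lemma complementPair_injective (s : J → ℝ) : Function.Injective (complementPair s) := by
  rw [← AffineMap.linear_injective_iff, linear_complementPair]
  exact antidiagonal_injective

lemma complementPair_zero (x : J → ℝ) : complementPair 0 x = antidiagonal x := by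
  ext ⟨i, j⟩
  fin_cases i <;> simp

lemma eq_complementPair_iff {s x : J → ℝ} {y : Fin 2 × J → ℝ} :
    y = complementPair s x ↔ (∀ j, y (0, j) = x j) ∧ ∀ j, y (0, j) + y (1, j) = s j := by
  simp only [funext_iff, Prod.forall, Fin.forall_fin_two, complementPair_zero_left,
    complementPair_one_left]
  refine and_congr_right fun h => forall_congr' fun j => ?_
  rw [eq_sub_iff_add_eq', h]

lemma transA_mulVec_inl {n k : ℕ} (y : Fin k × Fin n → ℝ) (i : Fin k) :
    (transA n k *ᵥ y) (.inl i) = ∑ j, y (i, j) := by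
  simp only [transA, mulVec, dotProduct, Fintype.sum_prod_type, of_apply, Sum.elim_inl, ite_mul,
    one_mul, zero_mul]
  rw [Finset.sum_comm]
  simp

lemma transA_mulVec_inr {n k : ℕ} (y : Fin k × Fin n → ℝ) (j : Fin n) :
    (transA n k *ᵥ y) (.inr j) = ∑ i, y (i, j) := by
  simp [transA, mulVec, dotProduct, Fintype.sum_prod_type]

lemma projXMat_mulVec {n d k : ℕ} (X : Fin n → Fin d → ℝ) (y : Fin k × Fin n → ℝ)
    (c : Fin k × Fin d) : (projXMat k X *ᵥ y) c = ∑ j, y (c.1, j) * X j c.2 := by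
  simp [projXMat, mulVec, dotProduct, Fintype.sum_prod_type, mul_comm]

lemma transA_two_mulVec_eq_iff {n : ℕ} {y : Fin 2 × Fin n → ℝ} {r : Fin 2 → ℝ} {u : Fin n → ℝ} :
    transA n 2 *ᵥ y = Sum.elim r u ↔
      ∃ z, ∑ j, z j = r 0 ∧ ∑ j, (u j - z j) = r 1 ∧ complementPair u z = y := by
  simp only [funext_iff, Sum.forall, transA_mulVec_inl, transA_mulVec_inr, Fin.forall_fin_two,
    Fin.sum_univ_two, Sum.elim_inl, Sum.elim_inr]
  constructor
  · rintro ⟨⟨h₀, h₁⟩, hu⟩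
    refine ⟨fun j => y (0, j), h₀, ?_, congrFun (eq_complementPair_iff.2 ⟨fun _ => rfl, hu⟩).symm⟩
    simpa only [← hu, add_sub_cancel_left] using h₁
  · rintro ⟨z, h₀, h₁, hy⟩
    obtain rfl := funext hy
    simp only [complementPair_zero_left, complementPair_one_left, add_sub_cancel, implies_true,
      and_true]
    exact ⟨h₀, h₁⟩

lemma transA_two_mulVec_eq_zero_iff {n : ℕ} {y : Fin 2 × Fin n → ℝ} :
    transA n 2 *ᵥ y = 0 ↔ ∃ z, ∑ j, z j = 0 ∧ antidiagonal z = y := by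
  rw [← Sum.elim_zero_zero, transA_two_mulVec_eq_iff]
  simp [complementPair_zero]

lemma projXMat_two_mulVec_complementPair {n d : ℕ} (X : Fin n → Fin d → ℝ) (u z : Fin n → ℝ) :
    projXMat 2 X *ᵥ complementPair u z = complementPair (∑ j, u j • X j) (∑ j, z j • X j) := by
  rw [eq_complementPair_iff]
  simp [projXMat_mulVec, sub_mul]

lemma projXMat_two_mulVec_antidiagonal {n d : ℕ} (X : Fin n → Fin d → ℝ) (z : Fin n → ℝ) :
    projXMat 2 X *ᵥ antidiagonal z = antidiagonal (∑ j, z j • X j) := by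
  simpa [complementPair_zero] using projXMat_two_mulVec_complementPair X 0 z

lemma transportationPolytope_one_eq_image_stdSimplex (n : ℕ) :
    transportationPolytope (n + 1) 2 ![1, n] = complementPair 1 '' stdSimplex ℝ (Fin (n + 1)) := by
  ext y
  have hb : transb (n + 1) 2 ![1, n] = Sum.elim ![1, (n : ℝ)] 1 := by
    ext (i | j)
    · fin_cases i <;> simp [transb]
    · rfl
  simp only [transportationPolytope, polySet, hb, Set.mem_ofPred_eq, transA_two_mulVec_eq_iff,
    neg_mulVec, one_mulVec, neg_nonpos, Set.mem_image]
  constructor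
  · rintro ⟨⟨z, hsum, -, rfl⟩, hy⟩
    exact ⟨z, ⟨fun j => by simpa using hy (0, j), hsum⟩, rfl⟩
  · rintro ⟨z, hz, rfl⟩
    refine ⟨⟨z, hz.2, by simp [hz.2], rfl⟩, ?_⟩
    rintro ⟨i, j⟩
    fin_cases i
    · simpa using hz.1 j
    · simpa using (mem_Icc_of_mem_stdSimplex hz j).2

lemma linearCombination_image_stdSimplex {R E ι : Type*} [Field R] [LinearOrder R]
    [IsStrictOrderedRing R] [AddCommGroup E] [Module R E] [Fintype ι] (v : ι → E) :
    Fintype.linearCombination R v '' stdSimplex R ι = convexHull R (Set.range v) := by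
  classical
  rw [← convexHull_rangle_single_eq_stdSimplex, LinearMap.image_convexHull, ← Set.range_comp]
  congr 2
  ext i
  simp [Fintype.linearCombination_apply_single]

theorem partitionPolytope_one_eq_image_convexHull {n d : ℕ} (X : Fin (n + 1) → Fin d → ℝ) :
    partitionPolytope 2 ![1, n] X =
      complementPair (∑ j, X j) '' convexHull ℝ (Set.range X) := by
  rw [partitionPolytope, transportationPolytope_one_eq_image_stdSimplex,
    ← linearCombination_image_stdSimplex, Set.image_image, Set.image_image]
  simp only [projXMat_two_mulVec_complementPair, Pi.one_apply, one_smul,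
    Fintype.linearCombination_apply]

theorem exists_eq_antidiagonal_single_sub_single {n : ℕ} {y : Fin 2 × Fin n → ℝ}
    (hy : y ∈ transportationCircuits n 2) :
    ∃ (t : ℝ) (i j : Fin n), y = antidiagonal (t • (Pi.single i 1 - Pi.single j 1)) := by
  obtain ⟨z, hsum, rfl⟩ := transA_two_mulVec_eq_zero_iff.1 hy.1
  obtain ⟨i, hi⟩ : ∃ i, z i ≠ 0 := Function.ne_iff.1 fun h => hy.2.1 (h ▸ map_zero _)
  obtain ⟨j, hji, hj⟩ : ∃ j ≠ i, z j ≠ 0 := by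
    by_contra! h
    exact hi (by rwa [Fintype.sum_eq_single i h] at hsum)
  set s : Fin n → ℝ := Pi.single i 1 - Pi.single j 1 with hs
  have hs₀ : ∑ l, s l = 0 := by simp [hs]
  have hsupp : ∀ l, z l = 0 → s l = 0 := by
    intro l hl
    have hli : l ≠ i := by rintro rfl; exact hi hl
    have hlj : l ≠ j := by rintro rfl; exact hj hl
    simp [hs, hli, hlj]
  obtain ⟨t, ht⟩ := exists_eq_smul_of_mem_circuits hy (y := antidiagonal s) (i := (0, i))
    (by simpa [neg_mulVec] using hi) (transA_two_mulVec_eq_zero_iff.2 ⟨s, hs₀, rfl⟩)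
    (by simpa [neg_mulVec, Fin.forall_fin_two] using hsupp)
  have ht₀ : t ≠ 0 := by
    rintro rfl
    simpa [hs, hji.symm] using congrFun ht (0, i)
  exact ⟨t⁻¹, i, j, by rw [map_smul, ht, inv_smul_smul₀ ht₀]⟩

theorem exists_projXMat_mulVec_eq_antidiagonal_smul_sub {n d : ℕ} {X : Fin n → Fin d → ℝ}
    {y : Fin 2 × Fin n → ℝ} (hy : y ∈ transportationCircuits n 2) :
    ∃ (t : ℝ) (i j : Fin n), projXMat 2 X *ᵥ y = antidiagonal (t • (X i - X j)) := by
  obtain ⟨t, i, j, rfl⟩ := exists_eq_antidiagonal_single_sub_single hy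
  refine ⟨t, i, j, ?_⟩
  rw [projXMat_two_mulVec_antidiagonal, ← Fintype.linearCombination_apply ℝ X]
  simp [Fintype.linearCombination_apply_single]

end TwoClusters

section TrapezoidPyramid

/-- The vertices of a pyramid over a right trapezoid whose legs are not parallel. -/
def pyramidVertex : Fin 5 → Fin 3 → ℝ :=
  ![![0, 0, 0], ![2, 0, 0], ![1, 1, 0], ![0, 1, 0], ![0, 0, 1]]

/-- The outer facet normals of the pyramid with vertices `pyramidVertex`. -/
def pyramidNormal : Matrix (Fin 5) (Fin 3) ℝ :=
  !![-1, 0, 0; 0, -1, 0; 0, 0, -1; 0, 1, 1; 1, 1, 2]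

/-- The right-hand sides of the facet inequalities with normals `pyramidNormal`. -/
def pyramidBound : Fin 5 → ℝ :=
  ![0, 0, 0, 1, 2]

lemma pyramidNormal_mulVec (w : Fin 3 → ℝ) :
    pyramidNormal *ᵥ w = ![-w 0, -w 1, -w 2, w 1 + w 2, w 0 + w 1 + 2 * w 2] := by
  ext i
  fin_cases i <;> simp [pyramidNormal, mulVec, dotProduct, Fin.sum_univ_three]

lemma mem_pyramid_iff {w : Fin 3 → ℝ} :
    w ∈ polySet (0 : Matrix (Fin 0) (Fin 3) ℝ) 0 pyramidNormal pyramidBound ↔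
      0 ≤ w 0 ∧ 0 ≤ w 1 ∧ 0 ≤ w 2 ∧ w 1 + w 2 ≤ 1 ∧ w 0 + w 1 + 2 * w 2 ≤ 2 := by
  simp [polySet, pyramidNormal_mulVec, Pi.le_def, Fin.forall_fin_succ, pyramidBound]

lemma hasStrictWitnesses_pyramid :
    HasStrictWitnesses (0 : Matrix (Fin 0) (Fin 3) ℝ) 0 pyramidNormal pyramidBound where
  exists_lt := ⟨![1/2, 1/4, 1/4], by simp, fun j => by
    rw [pyramidNormal_mulVec]
    fin_cases j <;> simp [pyramidBound] <;> norm_num⟩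
  exists_only_tight i := by
    refine ⟨![![0, 1/4, 1/4], ![1/2, 0, 1/4], ![1/2, 1/4, 0], ![1/4, 1/2, 1/2],
      ![1, 1/2, 1/4]] i, by simp, ?_⟩
    rw [pyramidNormal_mulVec]
    refine ⟨?_, fun j hj => ?_⟩
    · fin_cases i <;> simp [pyramidBound] <;> norm_num
    · fin_cases i <;> fin_cases j <;> simp [pyramidBound] at hj ⊢ <;> norm_num

lemma linearCombination_pyramidVertex (z : Fin 5 → ℝ) :
    Fintype.linearCombination ℝ pyramidVertex z = ![2 * z 1 + z 2, z 2 + z 3, z 4] := by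
  ext i
  fin_cases i <;>
    simp [Fintype.linearCombination_apply, Fin.sum_univ_five, pyramidVertex, mul_comm]

lemma convexHull_pyramidVertex :
    convexHull ℝ (Set.range pyramidVertex) =
      polySet (0 : Matrix (Fin 0) (Fin 3) ℝ) 0 pyramidNormal pyramidBound := by
  rw [← linearCombination_image_stdSimplex]
  ext w
  rw [mem_pyramid_iff]
  constructor
  · rintro ⟨z, ⟨hz, hsum⟩, rfl⟩
    rw [Fin.sum_univ_five] at hsum
    rw [linearCombination_pyramidVertex]
    refine ⟨?_, ?_, ?_, ?_, ?_⟩ <;> simp <;> linarith [hz 0, hz 1, hz 2, hz 3, hz 4]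
  · rintro ⟨h₀, h₁, h₂, h₃, h₄⟩
    -- The plane `w 0 = w 1` cuts the pyramid into two tetrahedra; the weights are barycentric
    -- coordinates in each.
    rcases le_total (w 1) (w 0) with hw | hw
    · refine ⟨![1 - (w 0 + w 1) / 2 - w 2, (w 0 - w 1) / 2, w 1, 0, w 2], ⟨fun i => ?_, ?_⟩, ?_⟩
      · fin_cases i <;> simp <;> linarith
      · simp only [Fin.sum_univ_five, cons_val]
        ring
      · rw [linearCombination_pyramidVertex]
        ext i
        fin_cases i <;> simp [mul_div_cancel₀]
    · refine ⟨![1 - w 1 - w 2, 0, w 0, w 1 - w 0, w 2], ⟨fun i => ?_, ?_⟩, ?_⟩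
      · fin_cases i <;> simp <;> linarith
      · simp only [Fin.sum_univ_five, cons_val]
        ring
      · rw [linearCombination_pyramidVertex]
        ext i
        fin_cases i <;> simp

-- The vector from the apex `(0, 0, 1)` to `(0, 2, 0)`, where the lines through the two legs meet.
lemma mem_circuits_pyramid :
    ![0, 2, -1] ∈ circuits (0 : Matrix (Fin 0) (Fin 3) ℝ) pyramidNormal := by
  refine mem_circuits_of_forall_exists_smul (by simp) (by simp) fun y _ hsupp => ⟨-y 2, ?_⟩
  have hfirst : y 0 = 0 := by simpa [pyramidNormal_mulVec] using hsupp 0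
  have hlast : y 0 + y 1 + 2 * y 2 = 0 := by simpa [pyramidNormal_mulVec] using hsupp 4
  ext i
  fin_cases i <;> simp <;> linarith

lemma ne_smul_pyramidVertex_sub (t : ℝ) (i j : Fin 5) :
    ![0, 2, -1] ≠ t • (pyramidVertex i - pyramidVertex j) := by
  intro h
  have h₀ := congrFun h 0
  have h₁ := congrFun h 1
  have h₂ := congrFun h 2
  fin_cases i <;> fin_cases j <;> simp [pyramidVertex] at h₀ h₁ h₂ <;> linarith

end TrapezoidPyramid

theorem stmt_13_general {n d : ℕ} (hn : 5 ≤ n) (hd : 3 ≤ d) :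
    ∃ (k : ℕ) (κ : Fin k → ℕ), (∑ i, κ i) = n ∧
      ∃ (X : Fin n → Fin d → ℝ) (p q : ℕ)
        (AP : Matrix (Fin p) (Fin k × Fin d) ℝ) (bP : Fin p → ℝ)
        (BP : Matrix (Fin q) (Fin k × Fin d) ℝ) (dP : Fin q → ℝ),
        Irredundant AP bP BP dP (partitionPolytope k κ X) ∧
        ¬ (circuits AP BP ⊆
            (fun y => (projXMat k X).mulVec y) '' transportationCircuits n k) := by
  obtain ⟨m, rfl⟩ : ∃ m, n = m + 1 := ⟨n - 1, by omega⟩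
  obtain ⟨ρ, hρ⟩ : ∃ ρ : Fin (m + 1) → Fin 5, ρ.Surjective :=
    ⟨_, Function.invFun_surjective (Fin.castLE_injective hn)⟩
  obtain ⟨σ, hσ⟩ : ∃ σ : Fin d → Fin 3, σ.Surjective :=
    ⟨_, Function.invFun_surjective (Fin.castLE_injective hd)⟩
  set f : (Fin 3 → ℝ) →ₗ[ℝ] (Fin d → ℝ) := LinearMap.funLeft ℝ ℝ σ
  have hf : Function.Injective f := LinearMap.funLeft_injective_of_surjective ℝ ℝ σ hσ
  let X : Fin (m + 1) → Fin d → ℝ := f ∘ pyramidVertex ∘ ρ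
  let φ := (complementPair (∑ j, X j)).comp f.toAffineMap
  have hφ : Function.Injective φ := (complementPair_injective _).comp hf
  have hP : partitionPolytope 2 ![1, m] X =
      φ '' polySet (0 : Matrix (Fin 0) (Fin 3) ℝ) 0 pyramidNormal pyramidBound := by
    rw [partitionPolytope_one_eq_image_convexHull, Set.range_comp, hρ.range_comp,
      ← LinearMap.image_convexHull, convexHull_pyramidVertex, Set.image_image]
    rfl
  obtain ⟨A', b', B', d', hirr, hcirc⟩ := hasStrictWitnesses_pyramid.exists_irredundant_image hφ
  let e := (Fintype.equivFin ((Fin 2 × Fin d) ⊕ Fin 0)).symm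
  refine ⟨2, ![1, m], by simp [add_comm], X, _, 5, A'.submatrix e id, b' ∘ e, B', d',
    hP ▸ hirr.submatrix_equiv e, fun hsub => ?_⟩
  rw [circuits_submatrix_equiv] at hsub
  obtain ⟨y, hy, hproj⟩ := hsub (hcirc ⟨_, mem_circuits_pyramid, rfl⟩)
  obtain ⟨t, i, j, hdiff⟩ := exists_projXMat_mulVec_eq_antidiagonal_smul_sub (X := X) hy
  refine ne_smul_pyramidVertex_sub t (ρ i) (ρ j) (hf (antidiagonal_injective ?_))
  simpa [φ, X] using hproj.symm.trans hdiff

/-- For every `n ≥ 5` there are `k`, cluster sizes `κ` summing to `n`, and points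
`X ⊂ ℝ^{n-2}` such that for some irredundant description of the fixed-shape partition polytope
`P(X,k,κ) = π_X(T(n,k,κ))`, `C(P(X,k,κ)) ⊄ π_X(C(T(n,k,κ)))`. -/
theorem stmt_13 (n : ℕ) (hn : 5 ≤ n) :
    ∃ (k : ℕ) (κ : Fin k → ℕ), (∑ i, κ i) = n ∧
      ∃ (X : Fin n → Fin (n - 2) → ℝ) (p q : ℕ)
        (AP : Matrix (Fin p) (Fin k × Fin (n - 2)) ℝ) (bP : Fin p → ℝ)
        (BP : Matrix (Fin q) (Fin k × Fin (n - 2)) ℝ) (dP : Fin q → ℝ),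
        Irredundant AP bP BP dP (partitionPolytope k κ X) ∧
        ¬ (circuits AP BP ⊆
            (fun y => (projXMat k X).mulVec y) '' transportationCircuits n k) :=
  stmt_13_general hn (by omega)
end
end
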